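/- arXiv:1109.5287 — 2 statements merged into one kernel-verified Lean document; each statement's English description precedes it below -/
import Mathlib

section
/- Let μ be a κ′-concave probability measure on ℝⁿ and ν a κ″-concave probability measure on ℝⁿ, where κ′, κ″ ∈ [−1,1] are nonzero and satisfy κ′ + κ″ > 0. Let κ be defined by 1/κ = 1/κ′ + 1/κ″. Then the convolution μ ∗ ν (the pushforward of the product measure μ ⊗ ν under the map (x,y) ↦ x+y) is κ-concave. -/
open MeasureTheory ProbabilityTheory Real
open scoped Pointwise ENNReal

noncomputable def ent {n : ℕ} (f : EuclideanSpace ℝ (Fin n) → ℝ) : ℝ :=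
  -∫ x, f x * Real.log (f x)

noncomputable def densSup {n : ℕ} (f : EuclideanSpace ℝ (Fin n) → ℝ) : ℝ :=
  (essSup (fun x => ENNReal.ofReal (f x)) volume).toReal

def HasDensity {Ω : Type*} [MeasurableSpace Ω] (P : Measure Ω) {n : ℕ}
    (X : Ω → EuclideanSpace ℝ (Fin n)) (f : EuclideanSpace ℝ (Fin n) → ℝ) : Prop :=
  Measure.map X P = volume.withDensity (fun x => ENNReal.ofReal (f x))

def ConvexForm {n : ℕ} (f : EuclideanSpace ℝ (Fin n) → ℝ) (β : ℝ) : Prop :=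
  ∃ (S : Set (EuclideanSpace ℝ (Fin n))) (V : EuclideanSpace ℝ (Fin n) → ℝ),
    IsOpen S ∧ Convex ℝ S ∧ ConvexOn ℝ S V ∧
    (∀ x ∈ S, 0 < V x) ∧ (∀ x ∈ S, f x = V x ^ (-β)) ∧ (∀ x ∉ S, f x = 0)

def LogConcaveDensity {n : ℕ} (f : EuclideanSpace ℝ (Fin n) → ℝ) : Prop :=
  (∀ x, 0 ≤ f x) ∧
  ∀ x y : EuclideanSpace ℝ (Fin n), ∀ t : ℝ, 0 < t → t < 1 →
    f x ^ t * f y ^ (1 - t) ≤ f (t • x + (1 - t) • y)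

def KConcave {n : ℕ} (μ : Measure (EuclideanSpace ℝ (Fin n))) (κ : ℝ) : Prop :=
  ∀ A B : Set (EuclideanSpace ℝ (Fin n)), MeasurableSet A → MeasurableSet B →
    0 < μ A → 0 < μ B → ∀ t : ℝ, 0 < t → t < 1 →
      (t * (μ A).toReal ^ κ + (1 - t) * (μ B).toReal ^ κ) ^ (1/κ) ≤
        (μ (t • A + (1 - t) • B)).toReal

def IsConvexBody {n : ℕ} (A : Set (EuclideanSpace ℝ (Fin n))) : Prop :=
  Convex ℝ A ∧ IsCompact A ∧ (interior A).Nonempty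

def IsUniformOn {Ω : Type*} [MeasurableSpace Ω] (P : Measure Ω) {n : ℕ}
    (X : Ω → EuclideanSpace ℝ (Fin n)) (A : Set (EuclideanSpace ℝ (Fin n))) : Prop :=
  Measure.map X P = (volume A)⁻¹ • volume.restrict A

/-!
The value of `μ ∗ ν` on `A` is the `μ`-integral of the `ν`-measures of the sections `A - x`, and
concavity of `ν` bounds the sections of `t • A + (1 - t) • B` from below by power means of those of
`A` and `B`. It remains to integrate this pointwise bound against the concave measure `μ`, which is
a Borell-Brascamp-Lieb inequality. By the layer cake formula it reduces to an inequality on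
`(0, ∞)` for the functions `s ↦ μ {s ≤ f}`, in which the levels are combined by a power mean of
exponent `p ≤ 1`. The substitution `s = a ^ (1 / p)` turns this mean into an arithmetic one, and
Hölder's inequality absorbs the Jacobian, which is bounded on the relevant range because `p ≤ 1`.
In the resulting inequality on the line, dividing the functions by their suprema makes their
superlevel sets nonempty for the same levels, so that the one-dimensional Brunn-Minkowski
inequality applies to them.
-/

section PowerMean

variable {p q r c t x y x' y' : ℝ}

/-- The weighted power mean of exponent `p` of two numbers, with weights `t` and `1 - t`. The
geometric mean is not encoded: since `1 / 0 = 0`, the exponent `p = 0` gives the constant `1`. -/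
noncomputable def powerMean (p t x y : ℝ) : ℝ :=
  (t * x ^ p + (1 - t) * y ^ p) ^ (1 / p)

lemma powerMean_one : powerMean 1 t x y = t * x + (1 - t) * y := by
  simp only [powerMean, rpow_one, div_one]

lemma weighted_add_pos (ht : t ∈ Set.Icc 0 1) (hx : 0 < x) (hy : 0 < y) :
    0 < t * x + (1 - t) * y :=
  convex_Ioi (0 : ℝ) hx hy ht.1 (sub_nonneg.2 ht.2) (add_sub_cancel t 1)

lemma weighted_rpow_add_pos (ht : t ∈ Set.Icc 0 1) (hx : 0 < x) (hy : 0 < y) :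
    0 < t * x ^ p + (1 - t) * y ^ p :=
  weighted_add_pos ht (rpow_pos_of_pos hx p) (rpow_pos_of_pos hy p)

lemma powerMean_pos (ht : t ∈ Set.Icc 0 1) (hx : 0 < x) (hy : 0 < y) : 0 < powerMean p t x y :=
  rpow_pos_of_pos (weighted_rpow_add_pos ht hx hy) _

lemma powerMean_le_powerMean (ht : t ∈ Set.Icc 0 1) (hx : 0 < x) (hy : 0 < y) (hxx' : x ≤ x')
    (hyy' : y ≤ y') : powerMean p t x y ≤ powerMean p t x' y' := by
  have h1t : 0 ≤ 1 - t := sub_nonneg.2 ht.2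
  rcases le_total p 0 with hp | hp
  · refine rpow_le_rpow_of_nonpos
      (weighted_rpow_add_pos ht (hx.trans_le hxx') (hy.trans_le hyy')) ?_ (one_div_nonpos.2 hp)
    exact add_le_add
      (mul_le_mul_of_nonneg_left (rpow_le_rpow_of_nonpos hx hxx' hp) ht.1)
      (mul_le_mul_of_nonneg_left (rpow_le_rpow_of_nonpos hy hyy' hp) h1t)
  · refine rpow_le_rpow (weighted_rpow_add_pos ht hx hy).le ?_ (one_div_nonneg.2 hp)
    exact add_le_add
      (mul_le_mul_of_nonneg_left (rpow_le_rpow hx.le hxx' hp) ht.1)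
      (mul_le_mul_of_nonneg_left (rpow_le_rpow hy.le hyy' hp) h1t)

lemma powerMean_mul_left (hp : p ≠ 0) (ht : t ∈ Set.Icc 0 1) (hc : 0 < c) (hx : 0 < x)
    (hy : 0 < y) : powerMean p t (c * x) (c * y) = c * powerMean p t x y := by
  have hsum : t * (c * x) ^ p + (1 - t) * (c * y) ^ p
      = c ^ p * (t * x ^ p + (1 - t) * y ^ p) := by
    rw [mul_rpow hc.le hx.le, mul_rpow hc.le hy.le]
    ring
  rw [powerMean, hsum, mul_rpow (by positivity) (weighted_rpow_add_pos ht hx hy).le,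
    ← rpow_mul hc.le, mul_one_div_cancel hp, rpow_one, powerMean]

lemma powerMean_rpow_rpow (hc : c ≠ 0) (ht : t ∈ Set.Icc 0 1) (hx : 0 < x) (hy : 0 < y) :
    powerMean p t (x ^ c) (y ^ c) = powerMean (c * p) t x y ^ c := by
  rw [powerMean, powerMean, ← rpow_mul hx.le, ← rpow_mul hy.le,
    ← rpow_mul (weighted_rpow_add_pos ht hx hy).le]
  congr 1
  field_simp

lemma powerMean_one_div_rpow_rpow (hc : c ≠ 0) (ht : t ∈ Set.Icc 0 1) (hx : 0 < x) (hy : 0 < y) :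
    powerMean (1 / c) t (x ^ c) (y ^ c) = (t * x + (1 - t) * y) ^ c := by
  rw [powerMean_rpow_rpow hc ht hx hy, mul_one_div_cancel hc, powerMean_one]

lemma powerMean_neg_inv_inv (ht : t ∈ Set.Icc 0 1) (hx : 0 < x) (hy : 0 < y) :
    powerMean (-p) t x⁻¹ y⁻¹ = (powerMean p t x y)⁻¹ := by
  simpa only [rpow_neg_one, neg_mul_neg, one_mul] using
    powerMean_rpow_rpow (p := -p) (neg_ne_zero.2 one_ne_zero) ht hx hy

lemma weighted_mul_rpow_add_le (h : p.HolderTriple q r) (ht : t ∈ Set.Icc 0 1)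
    (hx : 0 < x) (hy : 0 < y) (hx' : 0 < x') (hy' : 0 < y') :
    t * (x * x') ^ r + (1 - t) * (y * y') ^ r
      ≤ (t * x ^ p + (1 - t) * y ^ p) ^ (r / p) * (t * x' ^ q + (1 - t) * y' ^ q) ^ (r / q) := by
  have h1t : 0 ≤ 1 - t := sub_nonneg.2 ht.2
  have weights_nonneg (s : ℝ) {z w : ℝ} (hz : 0 < z) (hw : 0 < w) :
      ∀ i, 0 ≤ ![t ^ (1 / s) * z, (1 - t) ^ (1 / s) * w] i :=
    Fin.forall_fin_two.2
      ⟨mul_nonneg (rpow_nonneg ht.1 _) hz.le, mul_nonneg (rpow_nonneg h1t _) hw.le⟩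
  have absorb_weight {s w z : ℝ} (hs : 0 < s) (hw : 0 ≤ w) (hz : 0 < z) :
      (w ^ (1 / s) * z) ^ s = w * z ^ s := by
    rw [mul_rpow (by positivity) hz.le, ← rpow_mul hw, one_div_mul_cancel hs.ne', rpow_one]
  have merge_weights {w z z' : ℝ} (hw : 0 ≤ w) (hz : 0 < z) (hz' : 0 < z') :
      (w ^ (1 / p) * z * (w ^ (1 / q) * z')) ^ r = w * (z * z') ^ r := by
    have hw_rpow : w ^ (1 / p) * w ^ (1 / q) = w ^ (1 / r) := by
      rw [← rpow_add_of_nonneg hw h.one_div_nonneg h.symm.one_div_nonneg, one_div, one_div,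
        h.inv_add_inv_eq_inv, one_div]
    rw [mul_mul_mul_comm, hw_rpow, absorb_weight h.pos' hw (mul_pos hz hz')]
  have hölder := Lr_rpow_le_Lp_mul_Lq_of_nonneg Finset.univ h
    (f := ![t ^ (1 / p) * x, (1 - t) ^ (1 / p) * y])
    (g := ![t ^ (1 / q) * x', (1 - t) ^ (1 / q) * y'])
    (fun i _ => weights_nonneg p hx hy i) (fun i _ => weights_nonneg q hx' hy' i)
  simpa only [Fin.sum_univ_two, Matrix.cons_val_zero, Matrix.cons_val_one,
    merge_weights ht.1 hx hx', merge_weights h1t hy hy', absorb_weight h.pos ht.1 hx,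
    absorb_weight h.pos h1t hy, absorb_weight h.symm.pos ht.1 hx',
    absorb_weight h.symm.pos h1t hy'] using hölder

lemma powerMean_mul_le_of_holderTriple (h : p.HolderTriple q r) (ht : t ∈ Set.Icc 0 1)
    (hx : 0 < x) (hy : 0 < y) (hx' : 0 < x') (hy' : 0 < y') :
    powerMean r t (x * x') (y * y') ≤ powerMean p t x y * powerMean q t x' y' := by
  have hr := h.pos'
  have hP := weighted_rpow_add_pos (p := p) ht hx hy
  have hQ := weighted_rpow_add_pos (p := q) ht hx' hy'
  have hexponent (s : ℝ) : r / s * (1 / r) = 1 / s := by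
    rw [div_mul_div_comm, mul_one, mul_comm s, div_mul_cancel_left₀ hr.ne', one_div]
  calc powerMean r t (x * x') (y * y')
      ≤ ((t * x ^ p + (1 - t) * y ^ p) ^ (r / p)
          * (t * x' ^ q + (1 - t) * y' ^ q) ^ (r / q)) ^ (1 / r) :=
        rpow_le_rpow (weighted_rpow_add_pos ht (mul_pos hx hx') (mul_pos hy hy')).le
          (weighted_mul_rpow_add_le h ht hx hy hx' hy') (one_div_nonneg.2 hr.le)
    _ = powerMean p t x y * powerMean q t x' y' := by
        rw [mul_rpow (by positivity) (by positivity), ← rpow_mul hP.le, ← rpow_mul hQ.le,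
          hexponent, hexponent, powerMean, powerMean]

lemma powerMean_mul_le_of_neg_of_pos (hp : p < 0) (hpq : 0 < p + q) (hr : 1 / r = 1 / p + 1 / q)
    (ht : t ∈ Set.Icc 0 1) (hx : 0 < x) (hy : 0 < y) (hx' : 0 < x') (hy' : 0 < y') :
    powerMean r t (x * x') (y * y') ≤ powerMean p t x y * powerMean q t x' y' := by
  have hq : 0 < q := by linarith
  have hr_neg : r < 0 := by
    rw [← one_div_neg, hr, one_div_add_one_div hp.ne hq.ne']
    exact div_neg_of_pos_of_neg hpq (mul_neg_of_neg_of_pos hp hq)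
  have htriple : (-r).HolderTriple q (-p) := by
    refine ⟨?_, neg_pos.2 hr_neg, hq⟩
    simp only [one_div] at hr
    rw [inv_neg, inv_neg, hr]
    ring
  have hxx' := mul_pos hx hx'
  have hyy' := mul_pos hy hy'
  have hinv :
      (powerMean p t x y)⁻¹ ≤ (powerMean r t (x * x') (y * y'))⁻¹ * powerMean q t x' y' := by
    have := powerMean_mul_le_of_holderTriple htriple ht (inv_pos.2 hxx') (inv_pos.2 hyy') hx' hy'
    rwa [mul_inv, mul_inv, inv_mul_cancel_right₀ hx'.ne', inv_mul_cancel_right₀ hy'.ne', ← mul_inv,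
      ← mul_inv, powerMean_neg_inv_inv ht hx hy, powerMean_neg_inv_inv ht hxx' hyy'] at this
  rwa [inv_mul_eq_div, inv_le_iff_one_le_mul₀ (powerMean_pos ht hx hy), ← mul_div_right_comm,
    one_le_div₀ (powerMean_pos ht hxx' hyy'), mul_comm (powerMean q _ _ _)] at hinv

lemma powerMean_mul_le (hp : p ≠ 0) (hq : q ≠ 0) (hpq : 0 < p + q) (hr : 1 / r = 1 / p + 1 / q)
    (ht : t ∈ Set.Icc 0 1) (hx : 0 < x) (hy : 0 < y) (hx' : 0 < x') (hy' : 0 < y') :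
    powerMean r t (x * x') (y * y') ≤ powerMean p t x y * powerMean q t x' y' := by
  rcases hp.lt_or_gt with hp | hp
  · exact powerMean_mul_le_of_neg_of_pos hp hpq hr ht hx hy hx' hy'
  rcases hq.lt_or_gt with hq | hq
  · rw [mul_comm x, mul_comm y, mul_comm (powerMean p t x y)]
    exact powerMean_mul_le_of_neg_of_pos hq (by rwa [add_comm]) (by rwa [add_comm]) ht hx' hy' hx hy
  · have htriple : p.HolderTriple q r := ⟨by simpa only [one_div] using hr.symm, hp, hq⟩
    exact powerMean_mul_le_of_holderTriple htriple ht hx hy hx' hy'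

lemma min_div_le_div_powerMean (hp : p ≠ 0) (ht : t ∈ Set.Icc 0 1) (hx : 0 < x) (hy : 0 < y)
    (hc : 0 ≤ c) (hle : 0 < x' → 0 < y' → powerMean p t x' y' ≤ c) :
    min (x' / x) (y' / y) ≤ c / powerMean p t x y := by
  set m := min (x' / x) (y' / y)
  have hM : 0 < powerMean p t x y := powerMean_pos ht hx hy
  rcases le_or_gt m 0 with hm | hm
  · exact hm.trans (div_nonneg hc hM.le)
  have hmx : m * x ≤ x' := (le_div_iff₀ hx).1 (min_le_left _ _)
  have hmy : m * y ≤ y' := (le_div_iff₀ hy).1 (min_le_right _ _)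
  have hmx_pos := mul_pos hm hx
  have hmy_pos := mul_pos hm hy
  rw [le_div_iff₀ hM]
  calc m * powerMean p t x y = powerMean p t (m * x) (m * y) :=
        (powerMean_mul_left hp ht hm hx hy).symm
    _ ≤ powerMean p t x' y' := powerMean_le_powerMean ht hmx_pos hmy_pos hmx hmy
    _ ≤ c := hle (hmx_pos.trans_le hmx) (hmy_pos.trans_le hmy)

end PowerMean

lemma volume_add_volume_le_of_isCompact {K L : Set ℝ} (hK : IsCompact K) (hL : IsCompact L)
    (hKne : K.Nonempty) (hLne : L.Nonempty) : volume K + volume L ≤ volume (K + L) := by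
  obtain ⟨a, haK, ha⟩ := hK.exists_isGreatest hKne
  obtain ⟨b, hbL, hb⟩ := hL.exists_isLeast hLne
  have hsub : (b +ᵥ K) ∪ (a +ᵥ L) ⊆ K + L := by
    rintro _ (⟨x, hx, rfl⟩ | ⟨y, hy, rfl⟩)
    · exact ⟨x, hx, b, hbL, add_comm x b⟩
    · exact ⟨a, haK, y, hy, rfl⟩
  have hinter : (b +ᵥ K) ∩ (a +ᵥ L) ⊆ {a + b} := by
    rintro _ ⟨⟨x, hx, rfl⟩, y, hy, hxy⟩
    have hxa := ha hx
    have hby := hb hy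
    simp only [vadd_eq_add, Set.mem_singleton_iff] at hxy ⊢
    linarith
  calc volume K + volume L = volume (b +ᵥ K) + volume (a +ᵥ L) := by
        rw [measure_vadd, measure_vadd]
    _ = volume ((b +ᵥ K) ∪ (a +ᵥ L)) :=
        (measure_union₀ (hL.vadd a).measurableSet.nullMeasurableSet
          (measure_mono_null hinter (measure_singleton _))).symm
    _ ≤ volume (K + L) := measure_mono hsub

lemma volume_add_volume_le {X Y : Set ℝ} (hX : MeasurableSet X) (hY : MeasurableSet Y)
    (hXne : X.Nonempty) (hYne : Y.Nonempty) : volume X + volume Y ≤ volume (X + Y) := by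
  obtain ⟨x, hx⟩ := hXne
  obtain ⟨y, hy⟩ := hYne
  rw [hX.measure_eq_iSup_isCompact, hY.measure_eq_iSup_isCompact]
  simp only [iSup_and']
  refine ENNReal.biSup_add_biSup_le' ⟨∅, Set.empty_subset X, isCompact_empty⟩
    ⟨∅, Set.empty_subset Y, isCompact_empty⟩ ?_
  rintro K ⟨hKX, hK⟩ L ⟨hLY, hL⟩
  calc volume K + volume L ≤ volume (insert x K) + volume (insert y L) :=
        add_le_add (measure_mono (Set.subset_insert x K)) (measure_mono (Set.subset_insert y L))
    _ ≤ volume (insert x K + insert y L) :=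
        volume_add_volume_le_of_isCompact (hK.insert x) (hL.insert y) (Set.insert_nonempty x K)
          (Set.insert_nonempty y L)
    _ ≤ volume (X + Y) :=
        measure_mono (Set.add_subset_add (Set.insert_subset hx hKX) (Set.insert_subset hy hLY))

lemma weighted_volume_add_volume_le {X Y : Set ℝ} {t : ℝ} (ht : t ∈ Set.Icc 0 1)
    (hX : MeasurableSet X) (hY : MeasurableSet Y) (hXne : X.Nonempty) (hYne : Y.Nonempty) :
    ENNReal.ofReal t * volume X + ENNReal.ofReal (1 - t) * volume Y
      ≤ volume (t • X + (1 - t) • Y) := by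
  have hvol {s : ℝ} (hs : 0 ≤ s) (Z : Set ℝ) : ENNReal.ofReal s * volume Z = volume (s • Z) := by
    rw [Measure.addHaar_smul, Module.finrank_self, pow_one, abs_of_nonneg hs]
  rw [hvol ht.1, hvol (sub_nonneg.2 ht.2)]
  exact volume_add_volume_le (hX.const_smul₀ t) (hY.const_smul₀ (1 - t)) hXne.smul_set
    hYne.smul_set

section Layercake

variable {α : Type*} [MeasurableSpace α] (μ : Measure α) (f : α → ℝ)

lemma antitone_measure_superlevel : Antitone fun s : ℝ => μ {x | s ≤ f x} :=
  fun _ _ hst => measure_mono fun _ hx => hst.trans hx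

lemma measurable_measureReal_superlevel : Measurable fun s : ℝ => μ.real {x | s ≤ f x} :=
  (antitone_measure_superlevel μ f).measurable.ennreal_toReal

lemma bddAbove_range_measureReal_superlevel [IsFiniteMeasure μ] :
    BddAbove (Set.range fun s : ℝ => μ.real {x | s ≤ f x}) :=
  ⟨μ.real Set.univ, Set.forall_mem_range.2 fun _ => measureReal_mono (Set.subset_univ _)⟩

variable {μ f}

lemma bddAbove_support_measureReal_superlevel (hf : BddAbove (Set.range f)) :
    BddAbove (Function.support fun s : ℝ => μ.real {x | s ≤ f x}) := by
  obtain ⟨C, hC⟩ := hf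
  refine ⟨C, fun s hs => ?_⟩
  obtain ⟨x, hx⟩ := nonempty_of_measureReal_ne_zero hs
  exact le_trans hx (hC ⟨x, rfl⟩)

lemma integrableOn_measureReal_superlevel (hf : Integrable f μ) (hf0 : 0 ≤ f) :
    IntegrableOn (fun s : ℝ => μ.real {x | s ≤ f x}) (Set.Ioi 0) := by
  refine ⟨(measurable_measureReal_superlevel μ f).aestronglyMeasurable, ?_⟩
  rw [hasFiniteIntegral_iff_ofReal (Filter.Eventually.of_forall fun _ => measureReal_nonneg)]
  calc ∫⁻ s in Set.Ioi (0 : ℝ), ENNReal.ofReal (μ.real {x | s ≤ f x})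
      ≤ ∫⁻ s in Set.Ioi (0 : ℝ), μ {x | s ≤ f x} :=
        lintegral_mono fun _ => ENNReal.ofReal_toReal_le
    _ = ∫⁻ x, ENNReal.ofReal (f x) ∂μ :=
        (lintegral_eq_lintegral_meas_le μ (Filter.Eventually.of_forall hf0) hf.aemeasurable).symm
    _ < ∞ := hf.lintegral_lt_top

end Layercake

section BorellBrascampLieb

variable {f g h : ℝ → ℝ} {t : ℝ}

lemma weighted_integral_le_of_min_le (ht : t ∈ Set.Icc 0 1) (hfm : Measurable f)
    (hgm : Measurable g) (hf : Integrable f) (hg : Integrable g) (hh : Integrable h) (hf0 : 0 ≤ f)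
    (hg0 : 0 ≤ g) (hf_sup : IsLUB (Set.range f) 1) (hg_sup : IsLUB (Set.range g) 1)
    (hmin : ∀ x y, min (f x) (g y) ≤ h (t * x + (1 - t) * y)) :
    t * (∫ x, f x) + (1 - t) * (∫ x, g x) ≤ ∫ x, h x := by
  have h1t : 0 ≤ 1 - t := sub_nonneg.2 ht.2
  have hh0 : 0 ≤ h := fun x => by
    simpa [← add_mul] using (le_min (hf0 x) (hg0 x)).trans (hmin x x)
  have hsuperlevel : ∀ᵐ s : ℝ, ENNReal.ofReal t * volume {x | s ≤ f x}
      + ENNReal.ofReal (1 - t) * volume {x | s ≤ g x} ≤ volume {x | s ≤ h x} := by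
    filter_upwards [Measure.ae_ne volume 1] with s hs
    rcases hs.lt_or_gt with hs | hs
    · obtain ⟨_, ⟨x, rfl⟩, hx⟩ := (lt_isLUB_iff hf_sup).1 hs
      obtain ⟨_, ⟨y, rfl⟩, hy⟩ := (lt_isLUB_iff hg_sup).1 hs
      refine (weighted_volume_add_volume_le ht (measurableSet_le measurable_const hfm)
        (measurableSet_le measurable_const hgm) ⟨x, hx.le⟩ ⟨y, hy.le⟩).trans (measure_mono ?_)
      rintro _ ⟨_, ⟨x, hx, rfl⟩, _, ⟨y, hy, rfl⟩, rfl⟩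
      exact (le_min hx hy).trans (hmin x y)
    · have hempty {u : ℝ → ℝ} (hu : IsLUB (Set.range u) 1) : {x | s ≤ u x} = ∅ :=
        Set.eq_empty_of_forall_notMem fun x hx => (hs.trans_le hx).not_ge (hu.1 ⟨x, rfl⟩)
      simp [hempty hf_sup, hempty hg_sup]
  have hlintegral : ENNReal.ofReal t * (∫⁻ x, ENNReal.ofReal (f x))
      + ENNReal.ofReal (1 - t) * (∫⁻ x, ENNReal.ofReal (g x)) ≤ ∫⁻ x, ENNReal.ofReal (h x) := by
    have hmeas (u : ℝ → ℝ) := (antitone_measure_superlevel volume u).measurable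
    rw [lintegral_eq_lintegral_meas_le volume (.of_forall hf0) hfm.aemeasurable,
      lintegral_eq_lintegral_meas_le volume (.of_forall hg0) hgm.aemeasurable,
      lintegral_eq_lintegral_meas_le volume (.of_forall hh0) hh.aemeasurable,
      ← lintegral_const_mul _ (hmeas f), ← lintegral_const_mul _ (hmeas g),
      ← lintegral_add_left ((hmeas f).const_mul _)]
    exact lintegral_mono_ae (ae_restrict_of_ae hsuperlevel)
  have hIf := integral_nonneg (μ := volume) hf0
  have hIg := integral_nonneg (μ := volume) hg0
  rwa [← ofReal_integral_eq_lintegral_ofReal hf (.of_forall hf0),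
    ← ofReal_integral_eq_lintegral_ofReal hg (.of_forall hg0),
    ← ofReal_integral_eq_lintegral_ofReal hh (.of_forall hh0), ← ENNReal.ofReal_mul ht.1,
    ← ENNReal.ofReal_mul h1t, ← ENNReal.ofReal_add (mul_nonneg ht.1 hIf) (mul_nonneg h1t hIg),
    ENNReal.ofReal_le_ofReal_iff (integral_nonneg hh0)] at hlintegral

lemma isLUB_range_div_iSup {ι : Type*} {u : ι → ℝ} (hu : BddAbove (Set.range u))
    (hpos : 0 < ⨆ i, u i) : IsLUB (Set.range fun i => u i / ⨆ j, u j) 1 := by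
  have : Nonempty ι := not_isEmpty_iff.1 fun _ => by simp at hpos
  have hscaled := (OrderIso.divRight₀ (⨆ i, u i) hpos).isLUB_image'.2 (isLUB_ciSup hu)
  simpa only [OrderIso.divRight₀_apply, ← Set.range_comp, Function.comp_def,
    div_self hpos.ne'] using hscaled

lemma iSup_pos_of_integral_pos {α : Type*} [MeasurableSpace α] {μ : Measure α} {u : α → ℝ}
    (hu : BddAbove (Set.range u)) (hpos : 0 < ∫ x, u x ∂μ) : 0 < ⨆ x, u x := by
  by_contra! hle
  exact hpos.not_ge (integral_nonpos fun x => (le_ciSup hu x).trans hle)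

lemma powerMean_integral_le {k r : ℝ} (ht : t ∈ Set.Icc 0 1) (hr0 : r ≠ 0) (hr1 : -1 < r)
    (hk : 1 / k = 1 / r + 1) (hfm : Measurable f) (hgm : Measurable g) (hh : Integrable h)
    (hf0 : 0 ≤ f) (hg0 : 0 ≤ g) (hh0 : 0 ≤ h) (hf_bdd : BddAbove (Set.range f))
    (hg_bdd : BddAbove (Set.range g)) (hf_pos : 0 < ∫ x, f x) (hg_pos : 0 < ∫ x, g x)
    (hle : ∀ x y, 0 < f x → 0 < g y → powerMean r t (f x) (g y) ≤ h (t * x + (1 - t) * y)) :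
    powerMean k t (∫ x, f x) (∫ x, g x) ≤ ∫ x, h x := by
  set A := ⨆ x, f x
  set B := ⨆ y, g y
  have hA : 0 < A := iSup_pos_of_integral_pos hf_bdd hf_pos
  have hB : 0 < B := iSup_pos_of_integral_pos hg_bdd hg_pos
  set M := powerMean r t A B
  have hM : 0 < M := powerMean_pos ht hA hB
  have hmin (x y : ℝ) : min (f x / A) (g y / B) ≤ h (t * x + (1 - t) * y) / M :=
    min_div_le_div_powerMean hr0 ht hA hB (hh0 _) (hle x y)
  have hnormalized : t * ((∫ x, f x) / A) + (1 - t) * ((∫ x, g x) / B) ≤ (∫ x, h x) / M := by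
    simpa only [integral_div] using weighted_integral_le_of_min_le ht (hfm.div_const A)
      (hgm.div_const B) ((Integrable.of_integral_ne_zero hf_pos.ne').div_const A)
      ((Integrable.of_integral_ne_zero hg_pos.ne').div_const B) (hh.div_const M)
      (fun x => div_nonneg (hf0 x) hA.le) (fun x => div_nonneg (hg0 x) hB.le)
      (isLUB_range_div_iSup hf_bdd hA) (isLUB_range_div_iSup hg_bdd hB) hmin
  calc powerMean k t (∫ x, f x) (∫ x, g x)
      = powerMean k t (A * ((∫ x, f x) / A)) (B * ((∫ x, g x) / B)) := by
        rw [mul_div_cancel₀ _ hA.ne', mul_div_cancel₀ _ hB.ne']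
    _ ≤ M * powerMean 1 t ((∫ x, f x) / A) ((∫ x, g x) / B) :=
        powerMean_mul_le hr0 one_ne_zero (by linarith) (by rwa [one_div_one]) ht hA hB
          (div_pos hf_pos hA) (div_pos hg_pos hB)
    _ ≤ M * ((∫ x, h x) / M) := by
        rw [powerMean_one]
        exact mul_le_mul_of_nonneg_left hnormalized hM.le
    _ = ∫ x, h x := mul_div_cancel₀ _ hM.ne'

end BorellBrascampLieb

section Substitution

variable {F G H : ℝ → ℝ} {p q r k e t x y a b : ℝ}

/-- The density which `F s ds` on `(0, ∞)` acquires under the substitution `s = a ^ e`, extended by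
zero to the real line. -/
noncomputable def rpowPullback (e : ℝ) (F : ℝ → ℝ) : ℝ → ℝ :=
  (Set.Ioi 0).indicator fun a => |e| * a ^ (e - 1) * F (a ^ e)

lemma rpowPullback_of_pos (ha : 0 < a) : rpowPullback e F a = |e| * a ^ (e - 1) * F (a ^ e) :=
  Set.indicator_of_mem ha _

lemma rpowPullback_nonneg (hF : 0 ≤ F) : 0 ≤ rpowPullback e F :=
  Set.indicator_nonneg fun _ ha =>
    mul_nonneg (mul_nonneg (abs_nonneg e) (rpow_nonneg (le_of_lt ha) _)) (hF _)

lemma pos_and_pos_of_rpowPullback_pos (h : 0 < rpowPullback e F a) : 0 < a ∧ 0 < F (a ^ e) := by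
  have ha : 0 < a := Set.mem_of_indicator_ne_zero h.ne'
  rw [rpowPullback_of_pos ha] at h
  exact ⟨ha, pos_of_mul_pos_right h (mul_nonneg (abs_nonneg e) (rpow_nonneg ha.le _))⟩

lemma measurable_rpowPullback (hF : Measurable F) : Measurable (rpowPullback e F) :=
  Measurable.indicator (by fun_prop) measurableSet_Ioi

lemma integral_rpowPullback (he : e ≠ 0) : ∫ a, rpowPullback e F a = ∫ s in Set.Ioi 0, F s :=
  (integral_indicator measurableSet_Ioi).trans (integral_comp_rpow_Ioi F he)

lemma integrable_rpowPullback_iff (he : e ≠ 0) :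
    Integrable (rpowPullback e F) ↔ IntegrableOn F (Set.Ioi 0) :=
  (integrable_indicator_iff measurableSet_Ioi).trans (integrableOn_Ioi_comp_rpow_iff F he)

lemma bddAbove_range_rpowPullback (he0 : e ≠ 0) (he1 : 1 / e ≤ 1) (hF : 0 ≤ F)
    (hF_bdd : BddAbove (Set.range F)) (hF_supp : BddAbove (Function.support F)) :
    BddAbove (Set.range (rpowPullback e F)) := by
  obtain ⟨C, hC⟩ := hF_bdd
  obtain ⟨M, hM⟩ := hF_supp
  refine ⟨|e| * (max M 0) ^ (1 - 1 / e) * C, ?_⟩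
  have hC0 : 0 ≤ C := (hF 0).trans (hC ⟨0, rfl⟩)
  have hbound_nonneg : 0 ≤ |e| * (max M 0) ^ (1 - 1 / e) * C := by positivity
  rintro _ ⟨a, rfl⟩
  rcases (rpowPullback_nonneg hF a).eq_or_lt with hzero | hpos
  · exact hzero.symm.trans_le hbound_nonneg
  obtain ⟨ha, hFa⟩ := pos_and_pos_of_rpowPullback_pos hpos
  have hJacobian : a ^ (e - 1) = (a ^ e) ^ (1 - 1 / e) := by
    rw [← rpow_mul ha.le, mul_one_sub, mul_one_div_cancel he0]
  have haM : a ^ e ≤ max M 0 := (hM hFa.ne').trans (le_max_left M 0)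
  rw [rpowPullback_of_pos ha, hJacobian]
  have : 0 ≤ 1 - 1 / e := sub_nonneg.2 he1
  have hFC : F (a ^ e) ≤ C := hC ⟨_, rfl⟩
  gcongr

lemma exists_one_div_eq_one_div_add_one_div_sub_one (hp0 : p ≠ 0) (hp1 : p ≤ 1) (hq0 : q ≠ 0)
    (hpq : 0 < p + q) : ∃ r, r ≠ 0 ∧ -1 < r ∧ 1 / r = 1 / p + 1 / q - 1 := by
  refine ⟨(1 / p + 1 / q - 1)⁻¹, ?_⟩
  rcases (mul_ne_zero hp0 hq0).lt_or_gt with hneg | hpos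
  · have hsum : 1 / p + 1 / q < 0 := by
      rw [one_div_add_one_div hp0 hq0]
      exact div_neg_of_pos_of_neg hpq hneg
    have hs : 1 / p + 1 / q - 1 < -1 := by linarith
    have hs0 : 1 / p + 1 / q - 1 < 0 := by linarith
    refine ⟨inv_ne_zero hs0.ne, ?_, by rw [one_div, inv_inv]⟩
    rwa [neg_lt, ← inv_neg, inv_lt_one₀ (by linarith), lt_neg]
  · obtain ⟨hp, hq⟩ : 0 < p ∧ 0 < q := by
      rcases mul_pos_iff.1 hpos with h | h
      · exact h
      · linarith [h.1, h.2]
    have hs : 0 < 1 / p + 1 / q - 1 := by linarith [one_le_one_div hp hp1, one_div_pos.2 hq]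
    have hr := inv_pos.2 hs
    exact ⟨hr.ne', by linarith, by rw [one_div, inv_inv]⟩

lemma powerMean_mul_rpow_le (hp0 : p ≠ 0) (hp1 : p ≤ 1) (hq0 : q ≠ 0) (hpq : 0 < p + q)
    (hr : 1 / r = 1 / p + 1 / q - 1) (ht : t ∈ Set.Icc 0 1) (hx : 0 < x) (hy : 0 < y)
    (ha : 0 < a) (hb : 0 < b) :
    powerMean r t (x * a ^ (1 / p - 1)) (y * b ^ (1 / p - 1))
      ≤ powerMean q t x y * (t * a + (1 - t) * b) ^ (1 / p - 1) := by
  rcases hp1.eq_or_lt with rfl | hp1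
  · obtain rfl : r = q := by
      rwa [div_one, add_sub_cancel_left, one_div, one_div, inv_inj] at hr
    simp only [div_one, sub_self, rpow_zero, mul_one, le_refl]
  · have hc : 1 / p - 1 = (1 - p) / p := by rw [sub_div, div_self hp0]
    have hc0 : 1 / p - 1 ≠ 0 := hc ▸ div_ne_zero (sub_pos.2 hp1).ne' hp0
    have hp_le : p ≤ 1 / (1 / p - 1) := by
      rw [hc, one_div_div, le_div_iff₀ (sub_pos.2 hp1)]
      nlinarith [sq_nonneg p]
    rw [← powerMean_one_div_rpow_rpow hc0 ht ha hb]
    refine powerMean_mul_le hq0 (one_div_ne_zero hc0) (by linarith) ?_ ht hx hy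
      (rpow_pos_of_pos ha _) (rpow_pos_of_pos hb _)
    rw [one_div_one_div, hr]
    ring

lemma powerMean_rpowPullback_le (hp0 : p ≠ 0) (hp1 : p ≤ 1) (hq0 : q ≠ 0) (hpq : 0 < p + q)
    (hr0 : r ≠ 0) (hr : 1 / r = 1 / p + 1 / q - 1) (ht : t ∈ Set.Icc 0 1)
    (hle : ∀ a b, 0 < a → 0 < b → 0 < F a → 0 < G b →
      powerMean q t (F a) (G b) ≤ H (powerMean p t a b))
    (hFa : 0 < rpowPullback (1 / p) F a) (hGb : 0 < rpowPullback (1 / p) G b) :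
    powerMean r t (rpowPullback (1 / p) F a) (rpowPullback (1 / p) G b)
      ≤ rpowPullback (1 / p) H (t * a + (1 - t) * b) := by
  have he0 : 1 / p ≠ 0 := one_div_ne_zero hp0
  obtain ⟨ha, hFa⟩ := pos_and_pos_of_rpowPullback_pos hFa
  obtain ⟨hb, hGb⟩ := pos_and_pos_of_rpowPullback_pos hGb
  have hab := weighted_add_pos ht ha hb
  have hmean : powerMean p t (a ^ (1 / p)) (b ^ (1 / p)) = (t * a + (1 - t) * b) ^ (1 / p) := by
    simpa only [one_div_one_div] using powerMean_one_div_rpow_rpow he0 ht ha hb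
  have hF : powerMean q t (F (a ^ (1 / p))) (G (b ^ (1 / p)))
      ≤ H ((t * a + (1 - t) * b) ^ (1 / p)) :=
    hmean ▸ hle _ _ (rpow_pos_of_pos ha _) (rpow_pos_of_pos hb _) hFa hGb
  have hrearrange (s : ℝ) (u : ℝ → ℝ) : |1 / p| * s ^ (1 / p - 1) * u (s ^ (1 / p))
      = |1 / p| * (u (s ^ (1 / p)) * s ^ (1 / p - 1)) := by ring
  rw [rpowPullback_of_pos ha, rpowPullback_of_pos hb, rpowPullback_of_pos hab, hrearrange,
    hrearrange, hrearrange, powerMean_mul_left hr0 ht (abs_pos.2 he0) (by positivity)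
    (by positivity)]
  gcongr
  calc powerMean r t (F (a ^ (1 / p)) * a ^ (1 / p - 1)) (G (b ^ (1 / p)) * b ^ (1 / p - 1))
      ≤ powerMean q t (F (a ^ (1 / p))) (G (b ^ (1 / p))) * (t * a + (1 - t) * b) ^ (1 / p - 1) :=
        powerMean_mul_rpow_le hp0 hp1 hq0 hpq hr ht hFa hGb ha hb
    _ ≤ H ((t * a + (1 - t) * b) ^ (1 / p)) * (t * a + (1 - t) * b) ^ (1 / p - 1) := by
        gcongr

lemma powerMean_setIntegral_Ioi_le (hp0 : p ≠ 0) (hp1 : p ≤ 1) (hq0 : q ≠ 0) (hpq : 0 < p + q)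
    (hk : 1 / k = 1 / p + 1 / q) (ht : t ∈ Set.Icc 0 1) (hFm : Measurable F) (hGm : Measurable G)
    (hH : IntegrableOn H (Set.Ioi 0)) (hF0 : 0 ≤ F) (hG0 : 0 ≤ G) (hH0 : 0 ≤ H)
    (hF_bdd : BddAbove (Set.range F)) (hG_bdd : BddAbove (Set.range G))
    (hF_supp : BddAbove (Function.support F)) (hG_supp : BddAbove (Function.support G))
    (hF_pos : 0 < ∫ s in Set.Ioi 0, F s) (hG_pos : 0 < ∫ s in Set.Ioi 0, G s)
    (hle : ∀ a b, 0 < a → 0 < b → 0 < F a → 0 < G b →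
      powerMean q t (F a) (G b) ≤ H (powerMean p t a b)) :
    powerMean k t (∫ s in Set.Ioi 0, F s) (∫ s in Set.Ioi 0, G s) ≤ ∫ s in Set.Ioi 0, H s := by
  obtain ⟨r, hr0, hr1, hr⟩ := exists_one_div_eq_one_div_add_one_div_sub_one hp0 hp1 hq0 hpq
  have he0 : 1 / p ≠ 0 := one_div_ne_zero hp0
  have he1 : 1 / (1 / p) ≤ 1 := by rwa [one_div_one_div]
  rw [← integral_rpowPullback he0] at hF_pos hG_pos
  rw [← integral_rpowPullback (F := F) he0, ← integral_rpowPullback (F := G) he0,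
    ← integral_rpowPullback (F := H) he0]
  exact powerMean_integral_le ht hr0 hr1 (by rw [hr, hk]; ring) (measurable_rpowPullback hFm)
    (measurable_rpowPullback hGm) ((integrable_rpowPullback_iff he0).2 hH)
    (rpowPullback_nonneg hF0) (rpowPullback_nonneg hG0) (rpowPullback_nonneg hH0)
    (bddAbove_range_rpowPullback he0 he1 hF0 hF_bdd hF_supp)
    (bddAbove_range_rpowPullback he0 he1 hG0 hG_bdd hG_supp) hF_pos hG_pos
    fun _ _ => powerMean_rpowPullback_le hp0 hp1 hq0 hpq hr0 hr ht hle

end Substitution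

section Convolution

variable {E : Type*} [AddMonoid E] [MeasurableSpace E] [MeasurableAdd₂ E] (μ ν : Measure E)
  {A : Set E}

lemma measurable_measureReal_preimage_const_add [SFinite ν] (hA : MeasurableSet A) :
    Measurable fun x => ν.real ((x + ·) ⁻¹' A) :=
  (measurable_measure_prodMk_left (measurable_add hA)).ennreal_toReal

lemma integrable_measureReal_preimage_const_add [IsFiniteMeasure μ] [IsFiniteMeasure ν]
    (hA : MeasurableSet A) : Integrable (fun x => ν.real ((x + ·) ⁻¹' A)) μ :=
  .of_bound (measurable_measureReal_preimage_const_add ν hA).aestronglyMeasurable (ν.real Set.univ)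
    (.of_forall fun _ => by
      rw [norm_of_nonneg measureReal_nonneg]
      exact measureReal_mono (Set.subset_univ _))

lemma measureReal_conv_apply [IsFiniteMeasure ν] (hA : MeasurableSet A) :
    (μ ∗ ν).real A = ∫ x, ν.real ((x + ·) ⁻¹' A) ∂μ := by
  have hsection : Measurable fun x => ν ((x + ·) ⁻¹' A) :=
    measurable_measure_prodMk_left (measurable_add hA)
  simp only [measureReal_def]
  rw [integral_toReal hsection.aemeasurable (.of_forall fun _ => measure_lt_top ν _),
    Measure.conv, Measure.map_apply measurable_add hA, Measure.prod_apply (measurable_add hA)]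
  rfl

end Convolution

section KappaConcave

variable {E : Type*} [AddCommGroup E] [Module ℝ E] [MeasurableSpace E] {μ ν : Measure E}
  {p q κ t : ℝ}

/-- `κ`-concavity of a finite measure, for an exponent `κ ≠ 0`. The Minkowski combination
`t • A + (1 - t) • B` of measurable sets need not be measurable; `μ` is its outer measure. -/
def IsKappaConcave (μ : Measure E) (κ : ℝ) : Prop :=
  ∀ A B : Set E, MeasurableSet A → MeasurableSet B → 0 < μ A → 0 < μ B →
    ∀ t : ℝ, 0 < t → t < 1 →
      powerMean κ t (μ.real A) (μ.real B) ≤ μ.real (t • A + (1 - t) • B)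

lemma IsKappaConcave.powerMean_le_of_subset [IsFiniteMeasure μ] (hμ : IsKappaConcave μ κ)
    {A B C : Set E} (hA : MeasurableSet A) (hB : MeasurableSet B) (hA_pos : 0 < μ.real A)
    (hB_pos : 0 < μ.real B) (ht : t ∈ Set.Ioo 0 1) (hC : t • A + (1 - t) • B ⊆ C) :
    powerMean κ t (μ.real A) (μ.real B) ≤ μ.real C :=
  (hμ A B hA hB (ENNReal.toReal_pos_iff.1 hA_pos).1 (ENNReal.toReal_pos_iff.1 hB_pos).1
    t ht.1 ht.2).trans (measureReal_mono hC)

lemma IsKappaConcave.powerMean_integral_le [IsFiniteMeasure μ] (hμ : IsKappaConcave μ q)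
    (hp0 : p ≠ 0) (hp1 : p ≤ 1) (hq0 : q ≠ 0) (hpq : 0 < p + q) (hκ : 1 / κ = 1 / p + 1 / q)
    (ht : t ∈ Set.Ioo 0 1) {f g h : E → ℝ} (hfm : Measurable f) (hgm : Measurable g)
    (hh : Integrable h μ) (hf0 : 0 ≤ f) (hg0 : 0 ≤ g) (hh0 : 0 ≤ h)
    (hf_bdd : BddAbove (Set.range f)) (hg_bdd : BddAbove (Set.range g))
    (hf_pos : 0 < ∫ x, f x ∂μ) (hg_pos : 0 < ∫ x, g x ∂μ)
    (hle : ∀ x y, 0 < f x → 0 < g y →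
      powerMean p t (f x) (g y) ≤ h (t • x + (1 - t) • y)) :
    powerMean κ t (∫ x, f x ∂μ) (∫ x, g x ∂μ) ≤ ∫ x, h x ∂μ := by
  have layercake {u : E → ℝ} (hu : Integrable u μ) (hu0 : 0 ≤ u) :=
    hu.integral_eq_integral_meas_le (.of_forall hu0)
  have hf := Integrable.of_integral_ne_zero hf_pos.ne'
  have hg := Integrable.of_integral_ne_zero hg_pos.ne'
  rw [layercake hf hf0] at hf_pos ⊢
  rw [layercake hg hg0] at hg_pos ⊢
  rw [layercake hh hh0]
  refine powerMean_setIntegral_Ioi_le hp0 hp1 hq0 hpq hκ (Set.Ioo_subset_Icc_self ht)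
    (measurable_measureReal_superlevel μ f) (measurable_measureReal_superlevel μ g)
    (integrableOn_measureReal_superlevel hh hh0) (fun _ => measureReal_nonneg)
    (fun _ => measureReal_nonneg) (fun _ => measureReal_nonneg)
    (bddAbove_range_measureReal_superlevel μ f) (bddAbove_range_measureReal_superlevel μ g)
    (bddAbove_support_measureReal_superlevel hf_bdd)
    (bddAbove_support_measureReal_superlevel hg_bdd) hf_pos hg_pos fun a b ha hb hFa hGb => ?_
  refine hμ.powerMean_le_of_subset (measurableSet_le measurable_const hfm)
    (measurableSet_le measurable_const hgm) hFa hGb ht ?_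
  rintro _ ⟨_, ⟨x, hx, rfl⟩, _, ⟨y, hy, rfl⟩, rfl⟩
  exact (powerMean_le_powerMean (Set.Ioo_subset_Icc_self ht) ha hb hx hy).trans
    (hle x y (ha.trans_le hx) (hb.trans_le hy))

lemma IsKappaConcave.powerMean_section_le [MeasurableAdd E] [IsFiniteMeasure ν]
    (hν : IsKappaConcave ν κ) {A B C : Set E} (hA : MeasurableSet A) (hB : MeasurableSet B)
    (ht : t ∈ Set.Ioo 0 1) (hC : t • A + (1 - t) • B ⊆ C) {x y : E}
    (hx : 0 < ν.real ((x + ·) ⁻¹' A)) (hy : 0 < ν.real ((y + ·) ⁻¹' B)) :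
    powerMean κ t (ν.real ((x + ·) ⁻¹' A)) (ν.real ((y + ·) ⁻¹' B))
      ≤ ν.real ((t • x + (1 - t) • y + ·) ⁻¹' C) := by
  refine hν.powerMean_le_of_subset (measurable_const_add x hA) (measurable_const_add y hB) hx hy
    ht ?_
  rintro _ ⟨_, ⟨u, hu, rfl⟩, _, ⟨v, hv, rfl⟩, rfl⟩
  apply hC
  refine ⟨t • (x + u), Set.smul_mem_smul_set hu, (1 - t) • (y + v), Set.smul_mem_smul_set hv, ?_⟩
  simp only [smul_add, add_add_add_comm]

theorem statement3_general [MeasurableAdd₂ E] [IsFiniteMeasure μ] [IsFiniteMeasure ν] {κ' κ'' : ℝ}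
    (hκ''_le : κ'' ≤ 1) (hκ'0 : κ' ≠ 0) (hκ''0 : κ'' ≠ 0) (hsum : 0 < κ' + κ'')
    (hκ : 1 / κ = 1 / κ' + 1 / κ'') (hμ : IsKappaConcave μ κ') (hν : IsKappaConcave ν κ'') :
    IsKappaConcave (μ ∗ ν) κ := by
  intro A B hA hB hA_pos hB_pos t ht0 ht1
  obtain ⟨C, hC, hCm, hC_eq⟩ := exists_measurable_superset (μ ∗ ν) (t • A + (1 - t) • B)
  have hA_pos : 0 < (μ ∗ ν).real A := ENNReal.toReal_pos hA_pos.ne' (measure_ne_top _ _)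
  have hB_pos : 0 < (μ ∗ ν).real B := ENNReal.toReal_pos hB_pos.ne' (measure_ne_top _ _)
  have section_nonneg (D : Set E) : 0 ≤ fun x => ν.real ((x + ·) ⁻¹' D) :=
    fun _ => measureReal_nonneg
  have section_bdd (D : Set E) : BddAbove (Set.range fun x => ν.real ((x + ·) ⁻¹' D)) :=
    ⟨ν.real Set.univ, Set.forall_mem_range.2 fun _ => measureReal_mono (Set.subset_univ _)⟩
  rw [measureReal_def (μ ∗ ν) (t • A + _), ← hC_eq, ← measureReal_def]
  rw [measureReal_conv_apply μ ν hA] at hA_pos ⊢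
  rw [measureReal_conv_apply μ ν hB] at hB_pos ⊢
  rw [measureReal_conv_apply μ ν hCm]
  exact hμ.powerMean_integral_le hκ''0 hκ''_le hκ'0 (by rwa [add_comm]) (by rwa [add_comm])
    ⟨ht0, ht1⟩ (measurable_measureReal_preimage_const_add ν hA)
    (measurable_measureReal_preimage_const_add ν hB)
    (integrable_measureReal_preimage_const_add μ ν hCm) (section_nonneg A) (section_nonneg B)
    (section_nonneg C) (section_bdd A) (section_bdd B) hA_pos hB_pos
    fun x y hx hy => hν.powerMean_section_le hA hB ⟨ht0, ht1⟩ hC hx hy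

end KappaConcave

/-- Convolution of a κ'-concave and a κ''-concave probability measure is κ-concave,
where 1/κ = 1/κ' + 1/κ'' (Proposition 2.2). -/
theorem statement3 (n : ℕ) (μ ν : Measure (EuclideanSpace ℝ (Fin n)))
    [IsProbabilityMeasure μ] [IsProbabilityMeasure ν]
    (κ' κ'' κ : ℝ)
    (hκ'l : -1 ≤ κ') (hκ'u : κ' ≤ 1) (hκ''l : -1 ≤ κ'') (hκ''u : κ'' ≤ 1)
    (hκ'0 : κ' ≠ 0) (hκ''0 : κ'' ≠ 0)
    (hsum : 0 < κ' + κ'')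
    (hκ : 1 / κ = 1 / κ' + 1 / κ'')
    (h₁ : KConcave μ κ') (h₂ : KConcave ν κ'') :
    KConcave
      (Measure.map
        (fun p : EuclideanSpace ℝ (Fin n) × EuclideanSpace ℝ (Fin n) => p.1 + p.2)
        (μ.prod ν)) κ :=
  statement3_general hκ''u hκ'0 hκ''0 hsum hκ h₁ h₂
end

section
/- Fix β₀ > 1 and set c₀ = exp(−32β₀/(β₀ − 1)). There exist constants C′(β₀) > 0 and C″(β₀) > 0 depending only on β₀ with the following property. Let X be a random vector in ℝⁿ whose density f is of convex form with parameter β, where β ≥ n+1 and β ≥ β₀·n, and let K_f = {x : f(x) ≥ c₀ⁿ·‖f‖} be the essential support of the distribution of X. Then C′(β₀)·|K_f|^{2/n} ≤ H(X) ≤ C″(β₀)·|K_f|^{2/n}. -/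
open MeasureTheory ProbabilityTheory Real
open scoped Pointwise ENNReal

/-!
Let `f = V ^ (-β)` with `m = inf V`, so that `‖f‖ = m ^ (-β)`, and let `K` be the essential support
at level `c`. Markov's inequality gives `c ^ n * ‖f‖ * |K| ≤ 1`; with `-log ‖f‖ ≤ h(X)` this is the
lower bound. For the upper bound, `h(X)` is at most the Rényi entropy of an order `α < 1` with
`α * β₀ > 1`. Since `f ^ α = V ^ (-(α * β))` and convexity makes the volume of `{V ≤ (1 + s) * m}`
grow at most like `s ^ n`, a dyadic decomposition shows that `∫ f ^ α` is at most `A ^ n` times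
`‖f‖ ^ α * |K|` for a constant `A`, and Markov's inequality eliminates `‖f‖`.
-/

section DensityEntropy

variable {X : Type*} [MeasurableSpace X] {μ : Measure X} {f : X → ℝ} {M a : ℝ}

lemma abs_mul_log_le_of_le {y : ℝ} (hy : 0 ≤ y) (hyM : y ≤ M) (ha : a < 1) :
    |y * log y| ≤ |log M| * y + y ^ a / (1 - a) := by
  have ha' : 0 < 1 - a := by linarith
  rcases hy.eq_or_lt with rfl | hy
  · simp only [zero_mul, abs_zero, mul_zero, zero_add]
    positivity
  have upper : log y ≤ |log M| := (log_le_log hy hyM).trans (le_abs_self _)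
  have lower : -log y ≤ y ^ (a - 1) / (1 - a) := by
    have := log_le_rpow_div (inv_nonneg.mpr hy.le) ha'
    rwa [log_inv, inv_rpow hy.le, ← rpow_neg hy.le, neg_sub] at this
  have hya : y * (y ^ (a - 1) / (1 - a)) = y ^ a / (1 - a) := by
    rw [rpow_sub_one hy.ne']
    field_simp
  rw [abs_le]
  constructor
  · have := mul_le_mul_of_nonneg_left lower hy.le
    have : 0 ≤ |log M| * y := by positivity
    linarith
  · have := mul_le_mul_of_nonneg_left upper hy.le
    have : 0 ≤ y ^ a / (1 - a) := by positivity
    linarith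

lemma integrable_mul_log_of_integrable_rpow (hf₀ : ∀ x, 0 ≤ f x) (hfM : ∀ x, f x ≤ M)
    (hf : Integrable f μ) (ha : a < 1) (hfa : Integrable (fun x ↦ f x ^ a) μ) :
    Integrable (fun x ↦ f x * log (f x)) μ :=
  ((hf.const_mul |log M|).add (hfa.div_const (1 - a))).mono'
    (hf.aestronglyMeasurable.mul hf.aemeasurable.log.aestronglyMeasurable)
    (.of_forall fun x ↦ abs_mul_log_le_of_le (hf₀ x) (hfM x) ha)

lemma integral_mul_log_le_log_of_le (hf₀ : ∀ x, 0 ≤ f x) (hfM : ∀ x, f x ≤ M)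
    (hf₁ : ∫ x, f x ∂μ = 1) (hfl : Integrable (fun x ↦ f x * log (f x)) μ) :
    ∫ x, f x * log (f x) ∂μ ≤ log M := by
  have hf : Integrable f μ := integrable_of_integral_eq_one hf₁
  calc ∫ x, f x * log (f x) ∂μ ≤ ∫ x, f x * log M ∂μ := by
        refine integral_mono hfl (hf.mul_const _) fun x ↦ ?_
        rcases (hf₀ x).eq_or_lt with hx | hx
        · simp [← hx]
        · exact mul_le_mul_of_nonneg_left (log_le_log hx (hfM x)) hx.le
    _ = log M := by rw [integral_mul_const, hf₁, one_mul]

lemma integral_rpow_pos_of_integral_eq_one (hf₀ : ∀ x, 0 ≤ f x) (hf₁ : ∫ x, f x ∂μ = 1)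
    (hfa : Integrable (fun x ↦ f x ^ a) μ) : 0 < ∫ x, f x ^ a ∂μ := by
  have hsupp : 0 < μ (Function.support f) := by
    rw [← integral_pos_iff_support_of_nonneg hf₀ (integrable_of_integral_eq_one hf₁), hf₁]
    exact one_pos
  rw [integral_pos_iff_support_of_nonneg (fun x ↦ rpow_nonneg (hf₀ x) a) hfa]
  refine hsupp.trans_le (measure_mono fun x hx ↦ ?_)
  exact (rpow_pos_of_pos ((hf₀ x).lt_of_ne' hx) a).ne'

/-- Gibbs' inequality against the density `f ^ a / ∫ f ^ a`; the right-hand side is the Rényi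
entropy of order `a`. -/
lemma neg_integral_mul_log_le_log_integral_rpow (hf₀ : ∀ x, 0 ≤ f x) (hf₁ : ∫ x, f x ∂μ = 1)
    (hfl : Integrable (fun x ↦ f x * log (f x)) μ) (ha : a < 1)
    (hfa : Integrable (fun x ↦ f x ^ a) μ) :
    -∫ x, f x * log (f x) ∂μ ≤ log (∫ x, f x ^ a ∂μ) / (1 - a) := by
  have hf : Integrable f μ := integrable_of_integral_eq_one hf₁
  set I := ∫ x, f x ^ a ∂μ with hI
  have hI₀ : 0 < I := integral_rpow_pos_of_integral_eq_one hf₀ hf₁ hfa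
  have gibbs (x : X) : (a - 1) * (f x * log (f x)) - f x * log I ≤ f x ^ a / I - f x := by
    rcases (hf₀ x).eq_or_lt with hx | hx
    · rw [← hx]
      simp only [zero_mul, mul_zero, sub_zero]
      positivity
    have h := mul_le_mul_of_nonneg_left
      (log_le_sub_one_of_pos (show 0 < f x ^ (a - 1) / I by positivity)) hx.le
    rw [log_div (by positivity) hI₀.ne', log_rpow hx, rpow_sub_one hx.ne'] at h
    have : f x * (f x ^ a / f x / I - 1) = f x ^ a / I - f x := by field_simp
    linarith
  have h := integral_mono ((hfl.const_mul (a - 1)).sub (hf.mul_const (log I)))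
    ((hfa.div_const I).sub hf) gibbs
  simp only [Pi.sub_apply] at h
  rw [integral_sub (hfl.const_mul _) (hf.mul_const _), integral_sub (hfa.div_const _) hf,
    integral_const_mul, integral_mul_const, integral_div, ← hI, hf₁, div_self hI₀.ne'] at h
  rw [le_div_iff₀ (by linarith)]
  linarith

end DensityEntropy

lemma essSup_restrict_eq_biSup_of_continuousOn {X β : Type*} [TopologicalSpace X]
    [MeasurableSpace X] [OpensMeasurableSpace X] [CompleteLinearOrder β] [TopologicalSpace β]
    [OrderTopology β] [FirstCountableTopology β] {μ : Measure X} [μ.IsOpenPosMeasure]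
    {S : Set X} {g : X → β} (hS : IsOpen S) (hg : ContinuousOn g S) :
    essSup g (μ.restrict S) = ⨆ x ∈ S, g x := by
  refine le_antisymm (essSup_le_of_ae_le _ ?_) (iSup₂_le fun x hx ↦ ?_)
  · filter_upwards [ae_restrict_mem hS.measurableSet] with x hx
    exact le_iSup₂ (f := fun x (_ : x ∈ S) ↦ g x) x hx
  by_contra! hlt
  have hU : IsOpen (S ∩ g ⁻¹' Set.Ioi (essSup g (μ.restrict S))) :=
    hg.isOpen_inter_preimage hS isOpen_Ioi
  refine (hU.measure_pos μ ⟨x, hx, hlt⟩).ne' ?_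
  have : ∀ᵐ y ∂μ, y ∈ S → g y ≤ essSup g (μ.restrict S) :=
    (ae_restrict_iff' hS.measurableSet).mp ae_le_essSup
  rw [ae_iff] at this
  refine measure_mono_null (fun y hy ↦ ?_) this
  rw [Set.mem_ofPred_eq, Classical.not_imp, not_le]
  exact hy

lemma setLIntegral_iUnion_le_tsum_mul {X : Type*} [MeasurableSpace X] {μ : Measure X}
    {L : ℕ → Set X} {u : X → ℝ≥0∞} {c : ℕ → ℝ≥0∞} (hu : ∀ j, ∀ x ∈ disjointed L j, u x ≤ c j) :
    ∫⁻ x in ⋃ j, L j, u x ∂μ ≤ ∑' j, c j * μ (L j) := by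
  rw [← iUnion_disjointed]
  refine (lintegral_iUnion_le _ u).trans (ENNReal.tsum_le_tsum fun j ↦ ?_)
  calc ∫⁻ x in disjointed L j, u x ∂μ ≤ ∫⁻ _ in disjointed L j, c j ∂μ :=
        setLIntegral_mono measurable_const (hu j)
    _ = c j * μ (disjointed L j) := setLIntegral_const _ _
    _ ≤ c j * μ (L j) := by gcongr; exact disjointed_subset L j

lemma setLIntegral_le_tsum_mul_measure_sublevel {X : Type*} [MeasurableSpace X] {μ : Measure X}
    {S : Set X} {V : X → ℝ} {t : ℕ → ℝ} {u : X → ℝ≥0∞} {c : ℕ → ℝ≥0∞} (ht : ∀ y, ∃ j, y ≤ t j)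
    (hu : ∀ x ∈ S, ∀ j, (∀ i < j, t i < V x) → u x ≤ c j) :
    ∫⁻ x in S, u x ∂μ ≤ ∑' j, c j * μ {x ∈ S | V x ≤ t j} := by
  have hcover : S ⊆ ⋃ j, {x ∈ S | V x ≤ t j} := fun x hx ↦
    let ⟨j, hj⟩ := ht (V x)
    Set.mem_iUnion.mpr ⟨j, hx, hj⟩
  refine (lintegral_mono_set hcover).trans (setLIntegral_iUnion_le_tsum_mul fun j x hx ↦ ?_)
  rw [disjointed_eq_inter_compl] at hx
  refine hu x hx.1.1 j fun i hi ↦ not_le.mp fun h ↦ ?_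
  exact Set.mem_iInter₂.mp hx.2 i hi ⟨hx.1.1, h⟩

lemma measure_sublevel_pos {X : Type*} [TopologicalSpace X] [MeasurableSpace X] {μ : Measure X}
    [μ.IsOpenPosMeasure] {S : Set X} {V : X → ℝ} (hS : IsOpen S) (hV : ContinuousOn V S) {x₀ : X}
    (hx₀ : x₀ ∈ S) {a : ℝ} (ha : V x₀ < a) : 0 < μ {x ∈ S | V x ≤ a} :=
  ((hV.isOpen_inter_preimage hS isOpen_Iio).measure_pos μ ⟨x₀, hx₀, ha⟩).trans_le
    (measure_mono fun _ hx ↦ ⟨hx.1, le_of_lt hx.2⟩)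

lemma measure_sublevel_le_rpow_mul_setLIntegral {X : Type*} [MeasurableSpace X] {μ : Measure X}
    {S : Set X} {V : X → ℝ} (hpos : ∀ x ∈ S, 0 < V x) {a β : ℝ} (ha : 0 < a) (hβ : 0 ≤ β)
    (hmeas : NullMeasurableSet {x ∈ S | V x ≤ a} μ) :
    μ {x ∈ S | V x ≤ a} ≤
      ENNReal.ofReal (a ^ β) * ∫⁻ x in S, ENNReal.ofReal (V x ^ (-β)) ∂μ := by
  set T := {x ∈ S | V x ≤ a}
  have hle : ENNReal.ofReal (a ^ (-β)) * μ T ≤ ∫⁻ x in S, ENNReal.ofReal (V x ^ (-β)) ∂μ :=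
    calc ENNReal.ofReal (a ^ (-β)) * μ T = ∫⁻ _ in T, ENNReal.ofReal (a ^ (-β)) ∂μ :=
          (setLIntegral_const _ _).symm
      _ ≤ ∫⁻ x in T, ENNReal.ofReal (V x ^ (-β)) ∂μ := by
          refine lintegral_mono_ae ?_
          filter_upwards [ae_restrict_mem₀ hmeas] with x hx
          exact ENNReal.ofReal_le_ofReal
            (rpow_le_rpow_of_nonpos (hpos x hx.1) hx.2 (neg_nonpos.mpr hβ))
      _ ≤ _ := lintegral_mono_set fun _ hx ↦ hx.1
  calc μ T = ENNReal.ofReal (a ^ β) * (ENNReal.ofReal (a ^ (-β)) * μ T) := by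
        rw [← mul_assoc, ← ENNReal.ofReal_mul (by positivity), ← rpow_add ha, add_neg_cancel,
          rpow_zero, ENNReal.ofReal_one, one_mul]
    _ ≤ _ := by gcongr

section ConvexSublevel

open Filter Module Topology

variable {E : Type*} [NormedAddCommGroup E] [NormedSpace ℝ E] [FiniteDimensional ℝ E]
  [MeasurableSpace E] [BorelSpace E] {μ : Measure E} [μ.IsAddHaarMeasure]
  {S : Set E} {V : E → ℝ} {m : ℝ}

/-- By convexity, contracting the larger sublevel set towards `x₀` lands in the smaller one. -/
lemma addHaar_sublevel_le_of_mem (hV : ConvexOn ℝ S V) {x₀ : E} (hx₀ : x₀ ∈ S) {a b : ℝ}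
    (ha : V x₀ < a) (hab : a ≤ b) :
    μ {x ∈ S | V x ≤ b} ≤
      ENNReal.ofReal (((b - V x₀) / (a - V x₀)) ^ finrank ℝ E) * μ {x ∈ S | V x ≤ a} := by
  set r := (b - V x₀) / (a - V x₀) with hr
  have hr₁ : 1 ≤ r := (one_le_div (by linarith)).mpr (by linarith)
  have hr₀ : 0 < r := by linarith
  have hsub : {x ∈ S | V x ≤ b} ⊆ AffineMap.homothety x₀ r '' {x ∈ S | V x ≤ a} := by
    rintro x ⟨hx, hVx⟩
    have hw : 0 ≤ 1 - r⁻¹ := sub_nonneg.mpr (inv_le_one_of_one_le₀ hr₁)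
    have hr' : 0 ≤ r⁻¹ := by positivity
    refine ⟨(1 - r⁻¹) • x₀ + r⁻¹ • x, ⟨hV.1 hx₀ hx hw hr' (sub_add_cancel _ _), ?_⟩, ?_⟩
    · calc V ((1 - r⁻¹) • x₀ + r⁻¹ • x) ≤ (1 - r⁻¹) * V x₀ + r⁻¹ * V x :=
            hV.2 hx₀ hx hw hr' (sub_add_cancel _ _)
        _ ≤ (1 - r⁻¹) * V x₀ + r⁻¹ * b := by gcongr
        _ = V x₀ + (b - V x₀) / r := by ring
        _ = a := by
            rw [hr, div_div_cancel₀ (by linarith)]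
            ring
    · rw [AffineMap.homothety_apply, vsub_eq_sub, vadd_eq_add,
        show (1 - r⁻¹) • x₀ + r⁻¹ • x - x₀ = r⁻¹ • (x - x₀) by module, smul_inv_smul₀ hr₀.ne',
        sub_add_cancel]
  refine (measure_mono hsub).trans_eq ?_
  rw [Measure.addHaar_image_homothety, abs_of_pos (by positivity)]

lemma addHaar_sublevel_le_of_isGLB (hV : ConvexOn ℝ S V) (hm : IsGLB (V '' S) m) {a b : ℝ}
    (ha : m < a) (hab : a ≤ b) :
    μ {x ∈ S | V x ≤ b} ≤
      ENNReal.ofReal (((b - m) / (a - m)) ^ finrank ℝ E) * μ {x ∈ S | V x ≤ a} := by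
  obtain ⟨v, -, -, hv, hvS⟩ := hm.exists_seq_antitone_tendsto hm.nonempty
  have hlim : Tendsto (fun k ↦ ((b - v k) / (a - v k)) ^ finrank ℝ E) atTop
      (𝓝 (((b - m) / (a - m)) ^ finrank ℝ E)) :=
    ((hv.const_sub b).div (hv.const_sub a) (by linarith)).pow _
  have hratio : 0 < ((b - m) / (a - m)) ^ finrank ℝ E :=
    pow_pos (div_pos (by linarith) (by linarith)) _
  refine ge_of_tendsto (ENNReal.Tendsto.mul_const (ENNReal.tendsto_ofReal hlim)
    (.inl (ENNReal.ofReal_pos.mpr hratio).ne')) ?_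
  filter_upwards [hv.eventually_lt_const ha] with k hk
  obtain ⟨x, hx, hxv⟩ := hvS k
  rw [← hxv] at hk ⊢
  exact addHaar_sublevel_le_of_mem hV hx hk hab

lemma addHaar_sublevel_le_rpow_mul_of_isGLB_zero (hV : ConvexOn ℝ S V) (hpos : ∀ x ∈ S, 0 < V x)
    (hm : IsGLB (V '' S) 0) {β τ a : ℝ} (hβ : 0 ≤ β) (hτ : 0 < τ) (hτa : τ ≤ a) :
    μ {x ∈ S | V x ≤ a} ≤ ENNReal.ofReal (a ^ finrank ℝ E * τ ^ (β - finrank ℝ E)) *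
      ∫⁻ x in S, ENNReal.ofReal (V x ^ (-β)) ∂μ := by
  have ha : 0 < a := hτ.trans_le hτa
  have hscale := addHaar_sublevel_le_of_isGLB (μ := μ) hV hm hτ hτa
  rw [sub_zero, sub_zero] at hscale
  calc μ {x ∈ S | V x ≤ a}
      ≤ ENNReal.ofReal ((a / τ) ^ finrank ℝ E) * μ {x ∈ S | V x ≤ τ} := hscale
    _ ≤ ENNReal.ofReal ((a / τ) ^ finrank ℝ E) *
          (ENNReal.ofReal (τ ^ β) * ∫⁻ x in S, ENNReal.ofReal (V x ^ (-β)) ∂μ) := by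
        gcongr
        exact measure_sublevel_le_rpow_mul_setLIntegral hpos hτ hβ
          ((hV.convex_le τ).nullMeasurableSet μ)
    _ = _ := by
        rw [← mul_assoc, ← ENNReal.ofReal_mul (by positivity), div_pow, rpow_sub hτ, rpow_natCast]
        congr 2
        ring

lemma isGLB_pos_of_setLIntegral_rpow_neg_ne_top (hS : IsOpen S) (hV : ConvexOn ℝ S V)
    (hpos : ∀ x ∈ S, 0 < V x) (hm : IsGLB (V '' S) m) {β : ℝ} (hβ : finrank ℝ E < β)
    (hfin : ∫⁻ x in S, ENNReal.ofReal (V x ^ (-β)) ∂μ ≠ ∞) : 0 < m := by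
  have hm₀ : 0 ≤ m := hm.2 (Set.forall_mem_image.mpr fun x hx ↦ (hpos x hx).le)
  refine hm₀.lt_of_ne fun h ↦ ?_
  subst h
  obtain ⟨x₀, hx₀⟩ := hm.nonempty.of_image
  set a := V x₀ + 1
  have ha : 0 < a := by linarith [hpos x₀ hx₀]
  have hβd : 0 < β - finrank ℝ E := sub_pos.mpr hβ
  have hlim : Tendsto (fun τ ↦ ENNReal.ofReal (a ^ finrank ℝ E * τ ^ (β - finrank ℝ E)) *
      ∫⁻ x in S, ENNReal.ofReal (V x ^ (-β)) ∂μ) (𝓝[>] 0) (𝓝 0) := by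
    have h := ((continuousAt_rpow_const 0 _ (.inr hβd.le)).tendsto.const_mul
      (a ^ finrank ℝ E)).mono_left (nhdsWithin_le_nhds (s := Set.Ioi 0))
    rw [zero_rpow hβd.ne', mul_zero] at h
    simpa using ENNReal.Tendsto.mul_const (ENNReal.tendsto_ofReal h) (.inr hfin)
  have hzero : μ {x ∈ S | V x ≤ a} ≤ 0 := by
    refine ge_of_tendsto hlim ?_
    filter_upwards [Ioc_mem_nhdsGT ha] with τ hτ
    exact addHaar_sublevel_le_rpow_mul_of_isGLB_zero hV hpos hm
      ((Nat.cast_nonneg _).trans hβ.le) hτ.1 hτ.2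
  exact hzero.not_gt (measure_sublevel_pos hS (hV.continuousOn hS) hx₀ (lt_add_one _))

lemma essSup_indicator_rpow_neg_eq (hS : IsOpen S) (hV : ConvexOn ℝ S V) (hm₀ : 0 < m)
    (hm : IsGLB (V '' S) m) {β : ℝ} (hβ : 0 < β) :
    essSup (fun x ↦ ENNReal.ofReal (S.indicator (fun x ↦ V x ^ (-β)) x)) μ =
      ENNReal.ofReal (m ^ (-β)) := by
  have hmV : ∀ x ∈ S, m ≤ V x := fun x hx ↦ hm.1 (Set.mem_image_of_mem V hx)
  have hcont : ContinuousOn (fun x ↦ ENNReal.ofReal (V x ^ (-β))) S :=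
    ENNReal.continuous_ofReal.comp_continuousOn
      ((hV.continuousOn hS).rpow_const fun x hx ↦ .inl (hm₀.trans_le (hmV x hx)).ne')
  have hind : (fun x ↦ ENNReal.ofReal (S.indicator (fun x ↦ V x ^ (-β)) x)) =
      S.indicator fun x ↦ ENNReal.ofReal (V x ^ (-β)) :=
    (Set.indicator_comp_of_zero ENNReal.ofReal_zero).symm
  rw [hind, ENNReal.essSup_indicator_eq_essSup_restrict hS.measurableSet,
    essSup_restrict_eq_biSup_of_continuousOn hS hcont]
  obtain ⟨v, -, -, hv, hvS⟩ := hm.exists_seq_antitone_tendsto hm.nonempty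
  refine le_antisymm (iSup₂_le fun x hx ↦ ENNReal.ofReal_le_ofReal
    (rpow_le_rpow_of_nonpos hm₀ (hmV x hx) (by linarith))) ?_
  refine le_of_tendsto (ENNReal.tendsto_ofReal (hv.rpow_const (.inl hm₀.ne')))
    (.of_forall fun k ↦ ?_)
  obtain ⟨x, hx, hxv⟩ := hvS k
  rw [← hxv]
  exact le_iSup₂ (f := fun x (_ : x ∈ S) ↦ ENNReal.ofReal (V x ^ (-β))) x hx

lemma one_add_mul_div_rpow_neg_le {r p x : ℝ} (hr : 0 < r) (hrp : r ≤ p) (hx : 0 ≤ x) :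
    (1 + x * (r / p)) ^ (-p) ≤ (1 + x) ^ (-r) := by
  have hp : 0 < p := hr.trans_le hrp
  have bernoulli : 1 + x ≤ (1 + x * (r / p)) ^ (p / r) := by
    have hxr : 0 ≤ x * (r / p) := by positivity
    calc 1 + x = 1 + p / r * (x * (r / p)) := by field_simp
      _ ≤ _ := one_add_mul_self_le_rpow_one_add (by linarith) ((one_le_div hr).mpr hrp)
  calc (1 + x * (r / p)) ^ (-p) = ((1 + x * (r / p)) ^ (p / r)) ^ (-r) := by
        rw [← rpow_mul (by positivity)]
        congr 1
        field_simp
    _ ≤ (1 + x) ^ (-r) := rpow_le_rpow_of_nonpos (by positivity) bernoulli (by linarith)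

lemma rpow_neg_le_two_pow_rpow_neg {r p θ y : ℝ} {j : ℕ} (hr : 0 < r) (hrp : r ≤ p) (hθ : 0 < θ)
    (hθ₁ : θ ≤ 1) (hy : 1 ≤ y) (hyj : j ≠ 0 → 1 + 2 ^ j * (θ * (r / p)) ≤ y) :
    y ^ (-p) ≤ (θ * 2 ^ j) ^ (-r) := by
  have hp : 0 < p := hr.trans_le hrp
  rcases eq_or_ne j 0 with rfl | hj
  · calc y ^ (-p) ≤ 1 := rpow_le_one_of_one_le_of_nonpos hy (by linarith)
      _ ≤ (θ * 2 ^ 0) ^ (-r) := by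
        rw [pow_zero, mul_one]
        exact one_le_rpow_of_pos_of_le_one_of_nonpos hθ hθ₁ (by linarith)
  · calc y ^ (-p) ≤ (1 + 2 ^ j * (θ * (r / p))) ^ (-p) :=
          rpow_le_rpow_of_nonpos (by positivity) (hyj hj) (by linarith)
      _ ≤ (1 + 2 ^ j * θ) ^ (-r) := by
          rw [← mul_assoc]
          exact one_add_mul_div_rpow_neg_le hr hrp (by positivity)
      _ ≤ (θ * 2 ^ j) ^ (-r) :=
          rpow_le_rpow_of_nonpos (by positivity) (by linarith) (by linarith)

lemma tsum_ofReal_two_pow_rpow_neg_le {γ θ : ℝ} {d : ℕ} (hγ : 1 < γ) (hθ : 0 < θ) (hd : 0 < d) :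
    ∑' j : ℕ, ENNReal.ofReal ((θ * 2 ^ j) ^ (-(γ * d))) * ENNReal.ofReal ((2 ^ j) ^ d) ≤
      ENNReal.ofReal ((θ ^ (-γ) / (1 - 2 ^ (1 - γ))) ^ d) := by
  set ρ : ℝ := 2 ^ (1 - γ) with hρ
  have hρ₀ : 0 < ρ := by positivity
  have hρ₁ : ρ < 1 := rpow_lt_one_of_one_lt_of_neg one_lt_two (by linarith)
  have hterm (j : ℕ) : ENNReal.ofReal ((θ * 2 ^ j) ^ (-(γ * d))) * ENNReal.ofReal ((2 ^ j) ^ d) ≤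
      ENNReal.ofReal ((θ ^ (-γ)) ^ d * ρ ^ j) := by
    have hbase : (θ * 2 ^ j) ^ (-γ) * 2 ^ j = θ ^ (-γ) * ρ ^ j := by
      rw [mul_rpow hθ.le (by positivity), mul_assoc, hρ, sub_eq_neg_add, rpow_add_one two_ne_zero,
        mul_pow, ← rpow_natCast_mul zero_le_two, ← rpow_mul_natCast zero_le_two, mul_comm (j : ℝ)]
    rw [← ENNReal.ofReal_mul (by positivity), ← neg_mul, rpow_mul_natCast (by positivity),
      ← mul_pow, hbase, mul_pow]
    gcongr
    exact pow_le_of_le_one (by positivity) (pow_le_one₀ hρ₀.le hρ₁.le) hd.ne'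
  have hgeom := (hasSum_geometric_of_lt_one hρ₀.le hρ₁).mul_left ((θ ^ (-γ)) ^ d)
  calc ∑' j : ℕ, ENNReal.ofReal ((θ * 2 ^ j) ^ (-(γ * d))) * ENNReal.ofReal ((2 ^ j) ^ d)
      ≤ ∑' j : ℕ, ENNReal.ofReal ((θ ^ (-γ)) ^ d * ρ ^ j) := ENNReal.tsum_le_tsum hterm
    _ = ENNReal.ofReal ((θ ^ (-γ)) ^ d * (1 - ρ)⁻¹) := by
        rw [← ENNReal.ofReal_tsum_of_nonneg (fun j ↦ by positivity) hgeom.summable, hgeom.tsum_eq]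
    _ ≤ ENNReal.ofReal ((θ ^ (-γ) / (1 - ρ)) ^ d) := by
        rw [div_eq_mul_inv, mul_pow]
        gcongr
        exact le_self_pow₀ ((one_le_inv₀ (by linarith)).mpr (by linarith)) hd.ne'

lemma addHaar_sublevel_two_pow_le (hV : ConvexOn ℝ S V) (hm₀ : 0 < m) (hm : IsGLB (V '' S) m)
    {τ : ℝ} (hτ : 0 < τ) (j : ℕ) :
    μ {x ∈ S | V x ≤ m * (1 + 2 ^ (j + 1) * τ)} ≤
      ENNReal.ofReal ((2 ^ j) ^ finrank ℝ E) * μ {x ∈ S | V x ≤ m * (1 + 2 * τ)} := by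
  have hratio : (m * (1 + 2 ^ (j + 1) * τ) - m) / (m * (1 + 2 * τ) - m) = 2 ^ j := by
    rw [div_eq_iff (by ring_nf; positivity)]
    ring
  rw [← hratio]
  refine addHaar_sublevel_le_of_isGLB hV hm
    (lt_mul_of_one_lt_right hm₀ (lt_add_of_pos_right _ (by positivity))) ?_
  gcongr
  exact le_self_pow₀ one_le_two j.succ_ne_zero

/-- Sum over the dyadic shells `2 ^ j * τ < V / m - 1 ≤ 2 ^ (j + 1) * τ`, with
`τ = θ * (γ * d / p)`: convexity lets their volume grow by at most `2 ^ d` per step, while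
`(V / m) ^ (-p)` decays by `2 ^ (-γ * d)`. -/
lemma setLIntegral_rpow_neg_le_addHaar_sublevel (hV : ConvexOn ℝ S V) (hm₀ : 0 < m)
    (hm : IsGLB (V '' S) m) (hd : 0 < finrank ℝ E) {γ θ p : ℝ} (hγ : 1 < γ)
    (hp : γ * finrank ℝ E ≤ p) (hθ : 0 < θ) (hθ₁ : θ ≤ 1) :
    ∫⁻ x in S, ENNReal.ofReal ((V x / m) ^ (-p)) ∂μ ≤
      ENNReal.ofReal ((θ ^ (-γ) / (1 - 2 ^ (1 - γ))) ^ finrank ℝ E) *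
        μ {x ∈ S | V x ≤ m * (1 + 2 * (θ * (γ * finrank ℝ E / p)))} := by
  set r := γ * finrank ℝ E
  have hr₀ : 0 < r := by positivity
  have hp₀ : 0 < p := hr₀.trans_le hp
  set τ := θ * (r / p)
  have hτ : 0 < τ := by positivity
  have hexhaust (y : ℝ) : ∃ j : ℕ, y ≤ m * (1 + 2 ^ (j + 1) * τ) := by
    obtain ⟨j, hj⟩ := pow_unbounded_of_one_lt (y / (m * τ)) one_lt_two
    rw [div_lt_iff₀ (by positivity)] at hj
    have : 0 < 2 ^ j * (m * τ) := by positivity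
    exact ⟨j, by rw [pow_succ]; linarith⟩
  have hshell : ∀ x ∈ S, ∀ j, (∀ i < j, m * (1 + 2 ^ (i + 1) * τ) < V x) →
      ENNReal.ofReal ((V x / m) ^ (-p)) ≤ ENNReal.ofReal ((θ * 2 ^ j) ^ (-r)) := by
    intro x hx j hxj
    refine ENNReal.ofReal_le_ofReal (rpow_neg_le_two_pow_rpow_neg hr₀ hp hθ hθ₁ ?_ fun hj ↦ ?_)
    · exact (one_le_div hm₀).mpr (hm.1 (Set.mem_image_of_mem V hx))
    · obtain ⟨i, rfl⟩ := Nat.exists_eq_succ_of_ne_zero hj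
      exact (le_div_iff₀' hm₀).mpr (hxj i i.lt_succ_self).le
  calc ∫⁻ x in S, ENNReal.ofReal ((V x / m) ^ (-p)) ∂μ
      ≤ ∑' j : ℕ, ENNReal.ofReal ((θ * 2 ^ j) ^ (-r)) *
          μ {x ∈ S | V x ≤ m * (1 + 2 ^ (j + 1) * τ)} :=
        setLIntegral_le_tsum_mul_measure_sublevel hexhaust hshell
    _ ≤ ∑' j : ℕ, ENNReal.ofReal ((θ * 2 ^ j) ^ (-r)) *
          (ENNReal.ofReal ((2 ^ j) ^ finrank ℝ E) * μ {x ∈ S | V x ≤ m * (1 + 2 * τ)}) := by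
        gcongr with j
        exact addHaar_sublevel_two_pow_le hV hm₀ hm hτ j
    _ = (∑' j : ℕ, ENNReal.ofReal ((θ * 2 ^ j) ^ (-r)) * ENNReal.ofReal ((2 ^ j) ^ finrank ℝ E)) *
          μ {x ∈ S | V x ≤ m * (1 + 2 * τ)} := by
        simp only [← ENNReal.tsum_mul_right, mul_assoc]
    _ ≤ _ := by
        gcongr
        exact tsum_ofReal_two_pow_rpow_neg_le hγ hθ hd

end ConvexSublevel

section EssentialSupport

variable {n : ℕ} {f : EuclideanSpace ℝ (Fin n) → ℝ} {β β₀ α θ c : ℝ}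

/-- The essential support of a distribution with density `f`: the set where `f` is at least the
fraction `c ^ n` of its maximum. The paper's `K_f` is the case `c = c₀`. -/
def essentialSupport {n : ℕ} (f : EuclideanSpace ℝ (Fin n) → ℝ) (c : ℝ) :
    Set (EuclideanSpace ℝ (Fin n)) :=
  {x | c ^ n * densSup f ≤ f x}

lemma pow_mul_densSup_mul_volume_essentialSupport_le_one (hf₀ : ∀ x, 0 ≤ f x)
    (hf₁ : ∫ x, f x = 1) : c ^ n * densSup f * volume.real (essentialSupport f c) ≤ 1 :=
  (mul_meas_ge_le_integral_of_nonneg (.of_forall hf₀) (integrable_of_integral_eq_one hf₁)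
    _).trans_eq hf₁

lemma volume_essentialSupport_ne_top (hf₁ : ∫ x, f x = 1) (hc : 0 < c) (hM : 0 < densSup f) :
    volume (essentialSupport f c) ≠ ∞ :=
  ((integrable_of_integral_eq_one hf₁).measure_ge_lt_top (by positivity)).ne

lemma exp_neg_le_one_add_div_rpow_neg {x : ℝ} (hx : 0 ≤ x) (hβ : 0 < β) :
    exp (-x) ≤ (1 + x / β) ^ (-β) :=
  calc exp (-x) = exp (x / β) ^ (-β) := by
        rw [← exp_mul]
        congr 1
        field_simp
    _ ≤ (1 + x / β) ^ (-β) :=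
        rpow_le_rpow_of_nonpos (by positivity) (by linarith [add_one_le_exp (x / β)])
          (neg_nonpos.mpr hβ.le)

lemma sublevel_subset_essentialSupport {S : Set (EuclideanSpace ℝ (Fin n))}
    {V : EuclideanSpace ℝ (Fin n) → ℝ} {m : ℝ} (hfV : f = S.indicator fun x ↦ V x ^ (-β))
    (hM : densSup f = m ^ (-β)) (hm₀ : 0 < m) (hmV : ∀ x ∈ S, m ≤ V x) (hβ : 0 < β)
    {x : ℝ} (hx : 0 ≤ x) (hc : 0 ≤ c) (hcx : c ≤ exp (-x)) :
    {y ∈ S | V y ≤ m * (1 + x * n / β)} ⊆ essentialSupport f c := by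
  rintro y ⟨hy, hVy⟩
  have hcβ : c ^ n ≤ (1 + x * n / β) ^ (-β) :=
    calc c ^ n ≤ exp (-x) ^ n := by gcongr
      _ = exp (-(x * n)) := by rw [← exp_nat_mul]; ring_nf
      _ ≤ _ := exp_neg_le_one_add_div_rpow_neg (by positivity) hβ
  change c ^ n * densSup f ≤ f y
  calc c ^ n * densSup f ≤ (1 + x * n / β) ^ (-β) * m ^ (-β) := by
        rw [hM]
        gcongr
    _ = (m * (1 + x * n / β)) ^ (-β) := by rw [mul_comm m, mul_rpow (by positivity) hm₀.le]
    _ ≤ V y ^ (-β) :=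
        rpow_le_rpow_of_nonpos (hm₀.trans_le (hmV y hy)) hVy (neg_nonpos.mpr hβ.le)
    _ = f y := by rw [hfV, Set.indicator_of_mem hy]

namespace ConvexForm

lemma nonneg (hf : ConvexForm f β) (x : EuclideanSpace ℝ (Fin n)) : 0 ≤ f x := by
  obtain ⟨S, V, -, -, -, hpos, hfS, hfS'⟩ := hf
  by_cases hx : x ∈ S
  · rw [hfS x hx]
    exact rpow_nonneg (hpos x hx).le _
  · exact (hfS' x hx).ge

lemma exists_isGLB (hf : ConvexForm f β) (hβ : n < β) (hf₁ : ∫ x, f x = 1) :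
    ∃ S V m, ConvexOn ℝ S V ∧ IsOpen S ∧ 0 < m ∧ IsGLB (V '' S) m ∧
      f = S.indicator (fun x ↦ V x ^ (-β)) ∧ densSup f = m ^ (-β) := by
  obtain ⟨S, V, hS, -, hV, hpos, hfS, hfS'⟩ := hf
  obtain rfl : f = S.indicator fun x ↦ V x ^ (-β) :=
    (Set.indicator_eq_self.mpr (Function.support_subset_iff'.mpr hfS')).symm.trans
      (Set.indicator_congr hfS)
  have hne : S.Nonempty := by
    rw [Set.nonempty_iff_ne_empty]
    rintro rfl
    simp at hf₁
  have hglb : IsGLB (V '' S) (sInf (V '' S)) :=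
    isGLB_csInf (hne.image V) ⟨0, Set.forall_mem_image.mpr fun x hx ↦ (hpos x hx).le⟩
  have hfin : ∫⁻ x in S, ENNReal.ofReal (V x ^ (-β)) ≠ ∞ :=
    ((integrable_indicator_iff hS.measurableSet).mp
      (integrable_of_integral_eq_one hf₁)).lintegral_lt_top.ne
  have hm₀ : 0 < sInf (V '' S) :=
    isGLB_pos_of_setLIntegral_rpow_neg_ne_top hS hV hpos hglb (by simpa using hβ) hfin
  refine ⟨S, V, _, hV, hS, hm₀, hglb, rfl, ?_⟩
  rw [densSup, essSup_indicator_rpow_neg_eq hS hV hm₀ hglb (n.cast_nonneg.trans_lt hβ),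
    ENNReal.toReal_ofReal (by positivity)]

lemma densSup_pos (hf : ConvexForm f β) (hβ : n < β) (hf₁ : ∫ x, f x = 1) : 0 < densSup f := by
  obtain ⟨S, V, m, -, -, hm₀, -, -, hM⟩ := hf.exists_isGLB hβ hf₁
  rw [hM]
  positivity

lemma le_densSup (hf : ConvexForm f β) (hβ : n < β) (hf₁ : ∫ x, f x = 1)
    (x : EuclideanSpace ℝ (Fin n)) : f x ≤ densSup f := by
  obtain ⟨S, V, m, -, -, hm₀, hm, rfl, hM⟩ := hf.exists_isGLB hβ hf₁
  rw [hM]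
  refine Set.indicator_apply_le' (fun hx ↦ ?_) fun _ ↦ by positivity
  exact rpow_le_rpow_of_nonpos hm₀ (hm.1 (Set.mem_image_of_mem V hx))
    (neg_nonpos.mpr (n.cast_nonneg.trans hβ.le))

lemma lintegral_rpow_le (hf : ConvexForm f β) (hf₁ : ∫ x, f x = 1) (hn : 0 < n)
    (hβ₀ : 1 < β₀) (hβ : β₀ * n ≤ β) (hα : 0 < α) (hαβ₀ : 1 < α * β₀) (hθ : 0 < θ) (hθ₁ : θ ≤ 1)
    (hc : 0 ≤ c) (hcθ : c ≤ exp (-(2 * θ * β₀))) :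
    ∫⁻ x, ENNReal.ofReal (f x ^ α) ≤
      ENNReal.ofReal (densSup f ^ α * (θ ^ (-(α * β₀)) / (1 - 2 ^ (1 - α * β₀))) ^ n) *
        volume (essentialSupport f c) := by
  have hn' : (0 : ℝ) < n := Nat.cast_pos.mpr hn
  have hnβ : n < β := (lt_mul_of_one_lt_left hn' hβ₀).trans_le hβ
  obtain ⟨S, V, m, hV, hS, hm₀, hm, hfV, hM⟩ := hf.exists_isGLB hnβ hf₁
  have hmV : ∀ x ∈ S, m ≤ V x := fun x hx ↦ hm.1 (Set.mem_image_of_mem V hx)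
  have hcore := setLIntegral_rpow_neg_le_addHaar_sublevel (μ := volume) hV hm₀ hm (by simpa)
    hαβ₀ (p := α * β) (by simpa [mul_assoc, hα] using hβ) hθ hθ₁
  rw [finrank_euclideanSpace_fin] at hcore
  have hsub : {x ∈ S | V x ≤ m * (1 + 2 * (θ * (α * β₀ * n / (α * β))))} ⊆
      essentialSupport f c := by
    convert sublevel_subset_essentialSupport hfV hM hm₀ hmV (hn'.trans hnβ) (by positivity) hc hcθ
      using 6
    field_simp
  have hfα : (fun x ↦ ENNReal.ofReal (f x ^ α)) = S.indicator fun x ↦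
      ENNReal.ofReal (densSup f ^ α) * ENNReal.ofReal ((V x / m) ^ (-(α * β))) := by
    ext x
    by_cases hx : x ∈ S
    · have hVx : 0 < V x := hm₀.trans_le (hmV x hx)
      rw [Set.indicator_of_mem hx, ← ENNReal.ofReal_mul (by rw [hM]; positivity), hM, hfV,
        Set.indicator_of_mem hx, ← rpow_mul hVx.le, ← rpow_mul hm₀.le, div_rpow hVx.le hm₀.le,
        neg_mul, mul_comm β α, mul_div_cancel₀ _ (by positivity)]
    · simp [hfV, hx, hα.ne']
  calc ∫⁻ x, ENNReal.ofReal (f x ^ α)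
      = ENNReal.ofReal (densSup f ^ α) * ∫⁻ x in S, ENNReal.ofReal ((V x / m) ^ (-(α * β))) := by
        rw [hfα, lintegral_indicator hS.measurableSet,
          lintegral_const_mul' _ _ ENNReal.ofReal_ne_top]
    _ ≤ ENNReal.ofReal (densSup f ^ α) *
          (ENNReal.ofReal ((θ ^ (-(α * β₀)) / (1 - 2 ^ (1 - α * β₀))) ^ n) *
            volume (essentialSupport f c)) := by
        gcongr
        exact hcore.trans (by gcongr)
    _ = _ := by rw [← mul_assoc, ← ENNReal.ofReal_mul (by rw [hM]; positivity)]

lemma integrable_mul_log (hf : ConvexForm f β) (hβ : n < β) (hf₁ : ∫ x, f x = 1) (hα : α < 1)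
    (hfα : Integrable (fun x ↦ f x ^ α)) : Integrable (fun x ↦ f x * log (f x)) :=
  integrable_mul_log_of_integrable_rpow hf.nonneg (hf.le_densSup hβ hf₁)
    (integrable_of_integral_eq_one hf₁) hα hfα

lemma pow_mul_volume_le_exp_ent (hf : ConvexForm f β) (hβ : n < β) (hf₁ : ∫ x, f x = 1)
    (hfl : Integrable (fun x ↦ f x * log (f x))) :
    c ^ n * volume.real (essentialSupport f c) ≤ exp (ent f) := by
  have hM := hf.densSup_pos hβ hf₁
  calc c ^ n * volume.real (essentialSupport f c) ≤ (densSup f)⁻¹ := by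
        rw [← one_div, le_div_iff₀ hM, mul_right_comm]
        exact pow_mul_densSup_mul_volume_essentialSupport_le_one hf.nonneg hf₁
    _ = exp (-log (densSup f)) := by rw [exp_neg, exp_log hM]
    _ ≤ exp (ent f) :=
        exp_le_exp.mpr (neg_le_neg
          (integral_mul_log_le_log_of_le hf.nonneg (hf.le_densSup hβ hf₁) hf₁ hfl))

/-- Rényi entropy of order `α` dominates `ent f`, and `densSup f ≤ (c ^ n * |K|)⁻¹` by Markov. -/
lemma exp_ent_le (hf : ConvexForm f β) (hβ : n < β) (hf₁ : ∫ x, f x = 1) (hα₀ : 0 < α)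
    (hα : α < 1) (hfα : Integrable (fun x ↦ f x ^ α)) (hc : 0 < c) {A : ℝ} (hA : 0 < A)
    (hle : ∫ x, f x ^ α ≤ densSup f ^ α * A ^ n * volume.real (essentialSupport f c)) :
    exp (ent f) ≤ ((A * c ^ (-α)) ^ (1 / (1 - α))) ^ n * volume.real (essentialSupport f c) := by
  have hM := hf.densSup_pos hβ hf₁
  have hfl := hf.integrable_mul_log hβ hf₁ hα hfα
  have hI := integral_rpow_pos_of_integral_eq_one hf.nonneg hf₁ hfα
  set v := volume.real (essentialSupport f c)
  have hv : 0 < v := pos_of_mul_pos_right (hI.trans_le hle) (by positivity)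
  have hα' : 0 < 1 - α := sub_pos.mpr hα
  have hMα : densSup f ^ α ≤ (c ^ n * v) ^ (-α) := by
    rw [rpow_neg (by positivity), ← inv_rpow (by positivity)]
    gcongr
    rw [← one_div, le_div_iff₀ (by positivity), mul_left_comm, ← mul_assoc]
    exact pow_mul_densSup_mul_volume_essentialSupport_le_one hf.nonneg hf₁
  have hIle : ∫ x, f x ^ α ≤ (A * c ^ (-α)) ^ n * v ^ (1 - α) :=
    calc ∫ x, f x ^ α ≤ (c ^ n * v) ^ (-α) * A ^ n * v := hle.trans (by gcongr)
      _ = (A * c ^ (-α)) ^ n * v ^ (1 - α) := by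
        rw [mul_rpow (by positivity) hv.le, ← rpow_pow_comm hc.le, mul_pow, sub_eq_neg_add,
          rpow_add_one hv.ne']
        ring
  calc exp (ent f) ≤ exp (log (∫ x, f x ^ α) / (1 - α)) :=
        exp_le_exp.mpr (neg_integral_mul_log_le_log_integral_rpow hf.nonneg hf₁ hfl hα hfα)
    _ = (∫ x, f x ^ α) ^ (1 / (1 - α)) := by rw [rpow_def_of_pos hI, mul_one_div]
    _ ≤ ((A * c ^ (-α)) ^ n * v ^ (1 - α)) ^ (1 / (1 - α)) := by gcongr
    _ = ((A * c ^ (-α)) ^ (1 / (1 - α))) ^ n * v := by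
        rw [mul_rpow (by positivity) (by positivity), ← rpow_mul hv.le,
          mul_one_div_cancel hα'.ne', rpow_one, ← rpow_pow_comm (by positivity)]

end ConvexForm

lemma exists_le_exp_neg_two_mul (hβ₀ : 0 < β₀) (hc₀ : 0 < c) (hc₁ : c < 1) :
    ∃ θ, 0 < θ ∧ θ ≤ 1 ∧ c ≤ exp (-(2 * θ * β₀)) := by
  have hlog : 0 < -log c := neg_pos.mpr (log_neg hc₀ hc₁)
  refine ⟨min 1 (-log c / (2 * β₀)), lt_min one_pos (by positivity), min_le_left _ _, ?_⟩
  rw [← log_le_iff_le_exp hc₀, le_neg]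
  calc 2 * min 1 (-log c / (2 * β₀)) * β₀ = min 1 (-log c / (2 * β₀)) * (2 * β₀) := by ring
    _ ≤ -log c := (le_div_iff₀ (by positivity)).mp (min_le_right _ _)

lemma exists_integral_rpow_le (hβ₀ : 1 < β₀) (hα : 0 < α) (hαβ₀ : 1 < α * β₀) (hc₀ : 0 < c)
    (hc₁ : c < 1) :
    ∃ A > 0, ∀ n : ℕ, 1 ≤ n → ∀ β, β₀ * n ≤ β →
      ∀ f : EuclideanSpace ℝ (Fin n) → ℝ, ConvexForm f β → ∫ x, f x = 1 →
        Integrable (fun x ↦ f x ^ α) ∧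
          ∫ x, f x ^ α ≤ densSup f ^ α * A ^ n * volume.real (essentialSupport f c) := by
  obtain ⟨θ, hθ, hθ₁, hcθ⟩ := exists_le_exp_neg_two_mul (one_pos.trans hβ₀) hc₀ hc₁
  have hden : (0 : ℝ) < 1 - 2 ^ (1 - α * β₀) :=
    sub_pos.mpr (rpow_lt_one_of_one_lt_of_neg one_lt_two (by linarith))
  refine ⟨θ ^ (-(α * β₀)) / (1 - 2 ^ (1 - α * β₀)), by positivity, fun n hn β hβ f hf hf₁ ↦ ?_⟩
  have hnβ : n < β := (lt_mul_of_one_lt_left (Nat.cast_pos.mpr hn) hβ₀).trans_le hβ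
  have hle := hf.lintegral_rpow_le hf₁ hn hβ₀ hβ hα hαβ₀ hθ hθ₁ hc₀.le hcθ
  have hM := hf.densSup_pos hnβ hf₁
  have hv := volume_essentialSupport_ne_top hf₁ hc₀ hM
  have hfα₀ (x) : 0 ≤ f x ^ α := rpow_nonneg (hf.nonneg x) α
  have hmeas : AEStronglyMeasurable (fun x ↦ f x ^ α) :=
    ((integrable_of_integral_eq_one hf₁).aemeasurable.pow_const α).aestronglyMeasurable
  have hfin := ne_top_of_le_ne_top (ENNReal.mul_ne_top ENNReal.ofReal_ne_top hv) hle
  refine ⟨(lintegral_ofReal_ne_top_iff_integrable hmeas (.of_forall hfα₀)).mp hfin, ?_⟩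
  rw [integral_eq_lintegral_of_nonneg_ae (.of_forall hfα₀) hmeas]
  refine (ENNReal.toReal_mono (ENNReal.mul_ne_top ENNReal.ofReal_ne_top hv) hle).trans_eq ?_
  rw [ENNReal.toReal_mul, ENNReal.toReal_ofReal (by positivity), Measure.real]

lemma pow_mul_rpow_two_div {b v : ℝ} (hb : 0 ≤ b) (hv : 0 ≤ v) (hn : n ≠ 0) :
    (b ^ n * v) ^ ((2 : ℝ) / n) = b ^ 2 * v ^ ((2 : ℝ) / n) := by
  rw [mul_rpow (by positivity) hv, ← rpow_natCast_mul hb,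
    mul_div_cancel₀ _ (Nat.cast_ne_zero.mpr hn), rpow_two]

end EssentialSupport

theorem statement14_general {β₀ c : ℝ} (hβ₀ : 1 < β₀) (hc₀ : 0 < c) (hc₁ : c < 1) :
    ∃ C' C'' : ℝ, 0 < C' ∧ 0 < C'' ∧
      ∀ n : ℕ, 1 ≤ n → ∀ β : ℝ, β₀ * n ≤ β →
        ∀ f : EuclideanSpace ℝ (Fin n) → ℝ, ConvexForm f β → ∫ x, f x = 1 →
          C' * volume.real (essentialSupport f c) ^ ((2 : ℝ) / n) ≤ exp (2 * ent f / n) ∧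
          exp (2 * ent f / n) ≤ C'' * volume.real (essentialSupport f c) ^ ((2 : ℝ) / n) := by
  obtain ⟨α, hβ₀α, hα⟩ : ∃ α, 1 / β₀ < α ∧ α < 1 :=
    exists_between ((div_lt_one (by positivity)).mpr hβ₀)
  have hα₀ : 0 < α := lt_trans (by positivity) hβ₀α
  obtain ⟨A, hA, hA_le⟩ := exists_integral_rpow_le hβ₀ hα₀
    ((div_lt_iff₀ (by positivity)).mp hβ₀α) hc₀ hc₁
  set B := (A * c ^ (-α)) ^ (1 / (1 - α))
  refine ⟨c ^ 2, B ^ 2, by positivity, by positivity, fun n hn β hβ f hf hf₁ ↦ ?_⟩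
  have hnβ : n < β := (lt_mul_of_one_lt_left (Nat.cast_pos.mpr hn) hβ₀).trans_le hβ
  obtain ⟨hfα, hfα_le⟩ := hA_le n hn β hβ f hf hf₁
  have lower : c ^ n * volume.real (essentialSupport f c) ≤ exp (ent f) :=
    hf.pow_mul_volume_le_exp_ent hnβ hf₁ (hf.integrable_mul_log hnβ hf₁ hα hfα)
  have upper : exp (ent f) ≤ B ^ n * volume.real (essentialSupport f c) :=
    hf.exp_ent_le hnβ hf₁ hα₀ hα hfα hc₀ hA hfα_le
  have hexp : exp (2 * ent f / n) = exp (ent f) ^ ((2 : ℝ) / n) := by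
    rw [← exp_mul, mul_comm, mul_div_assoc]
  have hn₀ : n ≠ 0 := Nat.one_le_iff_ne_zero.mp hn
  rw [hexp, ← pow_mul_rpow_two_div hc₀.le measureReal_nonneg hn₀,
    ← pow_mul_rpow_two_div (by positivity) measureReal_nonneg hn₀]
  exact ⟨by gcongr, by gcongr⟩

/-- Entropy power of a convex measure is comparable to |K_f|^(2/n), where K_f is the
essential support (Corollary 5.5). -/
theorem statement14 (β₀ : ℝ) (hβ₀ : 1 < β₀) :
    ∃ C' C'' : ℝ, 0 < C' ∧ 0 < C'' ∧
      ∀ (n : ℕ), 1 ≤ n → ∀ β : ℝ, (n : ℝ) + 1 ≤ β → β₀ * n ≤ β →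
        ∀ f : EuclideanSpace ℝ (Fin n) → ℝ, ConvexForm f β → (∫ x, f x = 1) →
          C' * (volume {x | Real.exp (-32 * β₀ / (β₀ - 1)) ^ n * densSup f ≤ f x}).toReal
              ^ ((2 : ℝ) / n)
            ≤ Real.exp (2 * ent f / n) ∧
          Real.exp (2 * ent f / n) ≤
            C'' * (volume {x | Real.exp (-32 * β₀ / (β₀ - 1)) ^ n * densSup f ≤ f x}).toReal
              ^ ((2 : ℝ) / n) := by
  have hexponent : -32 * β₀ / (β₀ - 1) < 0 := div_neg_of_neg_of_pos (by linarith) (by linarith)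
  obtain ⟨C', C'', hC', hC'', h⟩ :=
    statement14_general hβ₀ (exp_pos _) (exp_lt_one_iff.mpr hexponent)
  exact ⟨C', C'', hC', hC'', fun n hn β _ ↦ h n hn β⟩
end
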